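/- Let 0 ≤ a < b ≤ 1. There exists p₀ > 1 such that for every p > p₀ there exist a function u_p ∈ C²([a,b]) with u_p > 0 on [a,b], u_p'(a) = u_p'(b) = 0, satisfying −u_p''(r) − ((N−1)/r)·u_p'(r) + u_p(r) = u_p(r)^p for r ∈ (a,b), and a point α_p ∈ (a,b) such that u_p is strictly increasing on [a,α_p] and strictly decreasing on [α_p,b]; moreover the family (u_p, α_p) can be chosen so that α_p → s̄(a,b) as p → ∞ and u_p(r) → G_{[a,b]}(r, s̄(a,b)) / G_{[a,b]}(s̄(a,b), s̄(a,b)) for every r ∈ [a,b] as p → ∞. -/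

import Mathlib

/-!
The solutions are produced by shooting from `a`. For a parameter `s` near `σ = s̄(a,b)` the radial
equation is solved with `u'(a) = 0`, `u(a) = φ(a)/φ(s)`, where `φ` is the multiple of `ξ_{[a,b]}`
given by the fundamental solutions (`exists_ivp`; the power is frozen outside `[0,2]` to make it
Lipschitz, and the freezing turns out to be inactive). For large `p` the solution has three phases.

* Left of `s` the term `u^p` is negligible as long as `u ≤ 1 - 1/√p`, because
  `(1 - 1/√p)^p → 0`; a Wronskian estimate keeps `u` close to `φ/φ(s)` (`left_asymptotics`), so
  the level `1 - 1/√p` is reached near `s` with slope close to `φ'(s)/φ(s)`.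
* In the layer `u ≥ 1 - 1/√p` the energy `u'²/2 - u²/2 + u^{p+1}/(p+1)` is nearly conserved. It
  forces `u ≤ 1 + 1/√p`, a short stay, a single maximum and an exit slope close to `-φ'(s)/φ(s)`
  (`hump_bounds`, `exists_hump`, `layer_asymptotics`).
* Right of the layer `u` is again nearly linear. It is determined by its Wronskians with `φ` and
  with the multiple `ψ` of `ζ_{[a,b]}`, whose limits are explicit in `s`; for `s` close to `σ` the
  solution stays below the layer (`right_region`, `full_asymptotics`).

The limit of the Wronskian with `ψ` at `b`, and hence the sign of `u'(b)` for large `p`, is that of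
`-(φ'ψ + φψ')(s)`, which changes from positive to negative at `σ` by the reflection law. As `u'(b)`
depends continuously on `s`, for large `p` there is `s_p → σ` with `u'(b) = 0` (`shooting`), and the
asymptotics with `s = s_p` give the limits of the maximum point and of `u_p`.
`GreenData.fundData`, `FundData.linData` and `GreenData.exists_scale` derive the required properties
of `φ` and `ψ` from the given fundamental solutions; the sign of `φ'ψ + φψ'` on both sides of `σ`
comes from the uniqueness of `s̄(a,b)` and the intermediate value theorem.
-/

open Real Set Filter Topology

/-- Context: the two fundamental solutions `ξ`, `ζ` of `ℒu = -u'' - ((N-1)/r) u' + u = 0`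
on `(0,1)` together with their basic properties (Proposition 2.1 of the paper). -/
structure GreenData (N : ℕ) where
  xi : ℝ → ℝ
  zeta : ℝ → ℝ
  xi_smooth : ContDiffOn ℝ 2 xi (Set.Icc 0 1)
  zeta_smooth : ContDiffOn ℝ 2 zeta (Set.Ioc 0 1)
  xi_pos : ∀ r ∈ Set.Icc (0:ℝ) 1, 0 < xi r
  zeta_pos : ∀ r ∈ Set.Ioc (0:ℝ) 1, 0 < zeta r
  xi_ode : ∀ r ∈ Set.Ioo (0:ℝ) 1,
    -(deriv (deriv xi) r) - ((N : ℝ) - 1) / r * deriv xi r + xi r = 0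
  zeta_ode : ∀ r ∈ Set.Ioo (0:ℝ) 1,
    -(deriv (deriv zeta) r) - ((N : ℝ) - 1) / r * deriv zeta r + zeta r = 0
  xi_deriv_zero : deriv xi 0 = 0
  zeta_deriv_one : deriv zeta 1 = 0
  xi_mono : StrictMonoOn xi (Set.Icc 0 1)
  xi_bdd : ∃ M : ℝ, ∀ r ∈ Set.Icc (0:ℝ) 1, xi r ≤ M
  zeta_anti : StrictAntiOn zeta (Set.Ioc 0 1)
  wronskian : ∀ r ∈ Set.Ioc (0:ℝ) 1,
    r ^ (N - 1) * (deriv xi r * zeta r - xi r * deriv zeta r) = 1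
  xi_lim : Filter.Tendsto xi (nhdsWithin 0 (Set.Ioi 0)) (nhds (1 / ((N : ℝ) - 2)))
  zeta_lim : Filter.Tendsto (fun r => r ^ (N - 2) * zeta r)
    (nhdsWithin 0 (Set.Ioi 0)) (nhds 1)
  zeta_deriv_lim : Filter.Tendsto (fun r => r ^ (N - 1) * deriv zeta r)
    (nhdsWithin 0 (Set.Ioi 0)) (nhds (-((N : ℝ) - 2)))

namespace GreenData

variable {N : ℕ}

/-- The function `ξ_{[a,b]}` of the paper. -/
noncomputable def xiI (d : GreenData N) (a b : ℝ) : ℝ → ℝ :=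
  if a = 0 then
    (if b = 1 then d.xi else fun r => d.xi r / deriv d.xi b)
  else if b = 1 then
    fun r => deriv d.xi a * d.zeta r - d.xi r * deriv d.zeta a
  else
    fun r => (deriv d.xi a * d.zeta r - d.xi r * deriv d.zeta a) /
      Real.sqrt (deriv d.xi a * deriv d.zeta b - deriv d.xi b * deriv d.zeta a)

/-- The function `ζ_{[a,b]}` of the paper. -/
noncomputable def zetaI (d : GreenData N) (a b : ℝ) : ℝ → ℝ :=
  if a = 0 then
    (if b = 1 then d.zeta
     else fun r => deriv d.xi b * d.zeta r - d.xi r * deriv d.zeta b)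
  else if b = 1 then
    fun r => -(d.zeta r / deriv d.zeta a)
  else
    fun r => (deriv d.xi b * d.zeta r - d.xi r * deriv d.zeta b) /
      Real.sqrt (deriv d.xi a * deriv d.zeta b - deriv d.xi b * deriv d.zeta a)

/-- The reflection law `ξ'_{[a,b]}(s)/ξ_{[a,b]}(s) + ζ'_{[a,b]}(s)/ζ_{[a,b]}(s) = 0`. -/
def ReflectionAt (d : GreenData N) (a b s : ℝ) : Prop :=
  deriv (d.xiI a b) s / d.xiI a b s + deriv (d.zetaI a b) s / d.zetaI a b s = 0

/-- The Green function `G_{[a,b]}(r,s)`. -/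
noncomputable def G (d : GreenData N) (a b r s : ℝ) : ℝ :=
  if r ≤ s then s ^ (N - 1) * d.xiI a b r * d.zetaI a b s
  else s ^ (N - 1) * d.xiI a b s * d.zetaI a b r

end GreenData

/-- `sbar` is the function associating to `0 ≤ a < b ≤ 1` the unique point
`s̄(a,b) ∈ (a,b)` satisfying the reflection law. -/
def IsSBar {N : ℕ} (d : GreenData N) (sbar : ℝ → ℝ → ℝ) : Prop :=
  ∀ a b : ℝ, 0 ≤ a → a < b → b ≤ 1 →
    sbar a b ∈ Set.Ioo a b ∧ d.ReflectionAt a b (sbar a b) ∧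
    ∀ s ∈ Set.Ioo a b, d.ReflectionAt a b s → s = sbar a b

/-- The map `M_∞^{(j)}` of the paper, with `α_j = s̄(β_{j-1},β_j)`. -/
noncomputable def Minf {N : ℕ} (d : GreenData N) (sbar : ℝ → ℝ → ℝ)
    (β : ℕ → ℝ) (j : ℕ) : ℝ :=
  (1 / (β j) ^ (N - 1)) *
    (1 / (deriv d.xi (β j) * d.zeta (sbar (β j) (β (j + 1))) -
            d.xi (sbar (β j) (β (j + 1))) * deriv d.zeta (β j)) -
     1 / (deriv d.xi (β j) * d.zeta (sbar (β (j - 1)) (β j)) -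
            d.xi (sbar (β (j - 1)) (β j)) * deriv d.zeta (β j)))

/-- Extension of a `(k-1)`-tuple `(β₁,…,β_{k-1})` by the conventions `β₀ = 0`, `β_k = 1`. -/
noncomputable def extendB (k : ℕ) (β : Fin (k - 1) → ℝ) : ℕ → ℝ := fun j =>
  if hj : 1 ≤ j ∧ j ≤ k - 1 then β ⟨j - 1, by omega⟩
  else if j = 0 then 0 else 1

/-- The open simplex `T = {0 = β₀ < β₁ < ⋯ < β_{k-1} < β_k = 1}` as a subset of `ℝ^{k-1}`. -/
def TSet (k : ℕ) : Set (Fin (k - 1) → ℝ) :=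
  {β | ∀ j < k, extendB k β j < extendB k β (j + 1)}

/-! ### Elementary calculus tools -/

lemma le_of_hasDerivAt_nonneg {f f' : ℝ → ℝ} {x y : ℝ} (hxy : x ≤ y)
    (hc : ContinuousOn f (Icc x y)) (hd : ∀ r ∈ Ioo x y, HasDerivAt f (f' r) r)
    (h : ∀ r ∈ Ioo x y, 0 ≤ f' r) : f x ≤ f y := by
  have := monotoneOn_of_deriv_nonneg (convex_Icc x y) hc
    (by rw [interior_Icc]; exact fun r hr => (hd r hr).differentiableAt.differentiableWithinAt)
    (by rw [interior_Icc]; intro r hr; rw [(hd r hr).deriv]; exact h r hr)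
  exact this (left_mem_Icc.2 hxy) (right_mem_Icc.2 hxy) hxy

lemma strictMonoOn_of_hasDerivAt_pos {f f' : ℝ → ℝ} {x y : ℝ}
    (hc : ContinuousOn f (Icc x y)) (hd : ∀ r ∈ Ioo x y, HasDerivAt f (f' r) r)
    (h : ∀ r ∈ Ioo x y, 0 < f' r) : StrictMonoOn f (Icc x y) :=
  strictMonoOn_of_deriv_pos (convex_Icc x y) hc
    (by rw [interior_Icc]; intro r hr; rw [(hd r hr).deriv]; exact h r hr)

lemma strictAntiOn_of_hasDerivAt_neg {f f' : ℝ → ℝ} {x y : ℝ}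
    (hc : ContinuousOn f (Icc x y)) (hd : ∀ r ∈ Ioo x y, HasDerivAt f (f' r) r)
    (h : ∀ r ∈ Ioo x y, f' r < 0) : StrictAntiOn f (Icc x y) :=
  strictAntiOn_of_deriv_neg (convex_Icc x y) hc
    (by rw [interior_Icc]; intro r hr; rw [(hd r hr).deriv]; exact h r hr)

/-- First time at which a continuous function starting below the level `l` reaches it. -/
lemma exists_first_hit {f : ℝ → ℝ} {x y l : ℝ} (hxy : x ≤ y) (hc : ContinuousOn f (Icc x y))
    (hx : f x < l) (hy : l ≤ f y) :
    ∃ t ∈ Ioc x y, f t = l ∧ ∀ r ∈ Ico x t, f r < l := by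
  set S : Set ℝ := {r | r ∈ Icc x y ∧ l ≤ f r} with hS
  have hSc : IsClosed S := by
    have := hc.preimage_isClosed_of_isClosed isClosed_Icc (isClosed_Ici (a := l))
    have h : S = Icc x y ∩ f ⁻¹' Ici l := by ext r; simp [hS]
    rwa [h]
  have hne : S.Nonempty := ⟨y, right_mem_Icc.2 hxy, hy⟩
  have hbd : BddBelow S := ⟨x, fun r hr => hr.1.1⟩
  have hmem := hSc.csInf_mem hne hbd
  set t := sInf S
  have hlt : ∀ r ∈ Ico x t, f r < l := by
    intro r hr
    by_contra hcon
    push Not at hcon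
    exact absurd (csInf_le hbd (show r ∈ S from ⟨⟨hr.1, hr.2.le.trans hmem.1.2⟩, hcon⟩))
      (not_le.2 hr.2)
  have hxt : x < t := by
    rcases hmem.1.1.lt_or_eq with h | h
    · exact h
    · exfalso; have := hmem.2; rw [← h] at this; linarith
  refine ⟨t, ⟨hxt, hmem.1.2⟩, ?_, hlt⟩
  obtain ⟨z, hz, hzl⟩ := intermediate_value_Icc hxt.le
    (hc.mono (Icc_subset_Icc_right hmem.1.2)) (show l ∈ Icc (f x) (f t) from ⟨hx.le, hmem.2⟩)
  rcases hz.2.lt_or_eq with h | h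
  · exact absurd hzl (hlt z ⟨hz.1, h⟩).ne
  · rw [← h]; exact hzl

/-! ### The radial initial value problem -/

/-- `Sol n a b g u v`: on `[a,b]` the pair `(u,v)` is continuous, satisfies `u' = v` and
`v' = g(u) - (n/r) v` in the interior, and `v a = 0`. With `n = N - 1` this says that `u` is a
radial solution of `Δu = g(u)` with a Neumann condition at `a` and derivative `v`. -/
structure Sol (n : ℕ) (a b : ℝ) (g u v : ℝ → ℝ) : Prop where
  cu : ContinuousOn u (Icc a b)
  cv : ContinuousOn v (Icc a b)
  du : ∀ r ∈ Ioo a b, HasDerivAt u (v r) r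
  dv : ∀ r ∈ Ioo a b, HasDerivAt v (g (u r) - n / r * v r) r
  va : v a = 0

/-- The averaged primitive `s ↦ s⁻ⁿ ∫ₐˢ tⁿ q(t) dt`, frozen for `s ≤ a`, so that it is defined and
continuous on the whole line. -/
noncomputable def avgPrim (n : ℕ) (a : ℝ) (q : ℝ → ℝ) (s : ℝ) : ℝ :=
  (∫ t in a..(max s a), t ^ n * q t) / (max s a) ^ n

lemma avgPrim_left {n : ℕ} {a : ℝ} {q : ℝ → ℝ} : avgPrim n a q a = 0 := by
  simp [avgPrim]

lemma avgPrim_abs_le {n : ℕ} {a : ℝ} (ha : 0 ≤ a) {q : ℝ → ℝ} {s C : ℝ}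
    (hs : a ≤ s) (hq : ∀ t ∈ Icc a s, |q t| ≤ C) :
    |avgPrim n a q s| ≤ C * (s - a) := by
  unfold avgPrim
  rw [max_eq_left hs]
  rcases hs.lt_or_eq with h | h
  · have h0 : 0 < s := ha.trans_lt h
    rw [abs_div, abs_of_pos (pow_pos h0 n), div_le_iff₀ (pow_pos h0 n)]
    have := intervalIntegral.norm_integral_le_of_norm_le_const (a := a) (b := s)
      (f := fun t => t ^ n * q t) (C := s ^ n * C) (by
        intro t ht
        rw [uIoc_of_le hs] at ht
        have h1 : 0 ≤ t := ha.trans ht.1.le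
        rw [norm_mul, Real.norm_eq_abs, Real.norm_eq_abs, abs_of_nonneg (pow_nonneg h1 n)]
        exact mul_le_mul (pow_le_pow_left₀ h1 ht.2 n) (hq t ⟨ht.1.le, ht.2⟩) (abs_nonneg _)
          (pow_nonneg h0.le n))
    rw [abs_of_nonneg (sub_nonneg.2 hs), Real.norm_eq_abs] at this
    linarith
  · subst h; simp

lemma continuous_avgPrim {n : ℕ} {a : ℝ} (ha : 0 ≤ a) {q : ℝ → ℝ} (hq : Continuous q) :
    Continuous (avgPrim n a q) := by
  have hcint : Continuous (fun s => ∫ t in a..s, t ^ n * q t) :=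
    intervalIntegral.continuous_primitive
      (fun x y => (((continuous_id.pow n).mul hq).intervalIntegrable x y)) a
  have hnum : Continuous (fun s => ∫ t in a..(max s a), t ^ n * q t) :=
    hcint.comp (continuous_id.max continuous_const)
  have hden : Continuous (fun s : ℝ => (max s a) ^ n) :=
    (continuous_id.max continuous_const).pow n
  rw [continuous_iff_continuousAt]
  intro s
  rcases lt_or_ge 0 (max s a) with h | h
  · exact hnum.continuousAt.div hden.continuousAt (pow_pos h n).ne'
  · have ha0 : a = 0 := le_antisymm ((le_max_right _ _).trans h) ha
    subst ha0
    have hs0 : s ≤ 0 := (le_max_left _ _).trans h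
    obtain ⟨C, hC⟩ := (isCompact_Icc (a := (0:ℝ)) (b := 1)).exists_bound_of_continuousOn
      hq.continuousOn
    have hC0 : 0 ≤ C := (norm_nonneg _).trans (hC 0 ⟨le_rfl, zero_le_one⟩)
    have hval : avgPrim n 0 q s = 0 := by simp [avgPrim, max_eq_right hs0]
    rw [ContinuousAt, hval]
    have hlim : Tendsto (fun x : ℝ => C * max x 0) (𝓝 s) (𝓝 0) := by
      have : Continuous (fun x : ℝ => C * max x 0) :=
        continuous_const.mul (continuous_id.max continuous_const)
      have h2 := this.tendsto s
      simpa [max_eq_right hs0] using h2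
    refine squeeze_zero_norm' ?_ hlim
    filter_upwards [Iio_mem_nhds (lt_of_le_of_lt hs0 zero_lt_one)] with x hx
    have hx : x < 1 := mem_Iio.1 hx
    rcases le_total x 0 with hx0 | hx0
    · simp [avgPrim, max_eq_right hx0]
    · rw [max_eq_left hx0, Real.norm_eq_abs]
      have := avgPrim_abs_le (n := n) le_rfl hx0
        (fun t ht => hC t ⟨ht.1, ht.2.trans hx.le⟩)
      simpa using this

lemma hasDerivAt_avgPrim {n : ℕ} {a : ℝ} (ha : 0 ≤ a) {q : ℝ → ℝ} (hq : Continuous q) {r : ℝ}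
    (hr : a < r) : HasDerivAt (avgPrim n a q) (q r - n / r * avgPrim n a q r) r := by
  have h0 : 0 < r := ha.trans_lt hr
  have hP : HasDerivAt (fun s => ∫ t in a..s, t ^ n * q t) (r ^ n * q r) r :=
    intervalIntegral.integral_hasDerivAt_right
      (((continuous_id.pow n).mul hq).intervalIntegrable a r)
      (((continuous_id.pow n).mul hq).stronglyMeasurableAtFilter _ _)
      ((continuous_id.pow n).mul hq).continuousAt
  have hd := hP.div (hasDerivAt_pow n r) (pow_pos h0 n).ne'
  have heq : avgPrim n a q =ᶠ[𝓝 r] fun s => (∫ t in a..s, t ^ n * q t) / s ^ n := by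
    filter_upwards [Ioi_mem_nhds hr] with s hs
    simp only [avgPrim, max_eq_left (mem_Ioi.1 hs).le]
  have hval : avgPrim n a q r = (∫ t in a..r, t ^ n * q t) / r ^ n := heq.self_of_nhds
  refine (hd.congr_of_eventuallyEq heq).congr_deriv ?_
  rw [hval]
  rcases n with _ | n
  · simp
  · field_simp
    simp [pow_succ]
    ring

lemma integral_exp_mul_aux {a s L : ℝ} (hL : L ≠ 0) :
    ∫ t in a..s, exp (L * t) = (exp (L * s) - exp (L * a)) / L := by
  have := intervalIntegral.integral_comp_mul_left (a := a) (b := s) exp hL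
  rw [this, integral_exp, smul_eq_mul]; ring

/-- Exponentially weighted bound for differences, the source of the contraction estimate. -/
lemma avgPrim_sub_le {n : ℕ} {a : ℝ} (ha : 0 ≤ a) {q₁ q₂ : ℝ → ℝ} (h₁ : Continuous q₁)
    (h₂ : Continuous q₂) {s M L : ℝ} (hL : 0 < L) (hM : 0 ≤ M) (hs : a ≤ s)
    (hq : ∀ t ∈ Icc a s, |q₁ t - q₂ t| ≤ M * exp (L * t)) :
    |avgPrim n a q₁ s - avgPrim n a q₂ s| ≤ M / L * exp (L * s) := by
  unfold avgPrim
  rw [max_eq_left hs]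
  rcases hs.lt_or_eq with h | h
  · have h0 : 0 < s := ha.trans_lt h
    rw [← sub_div, ← intervalIntegral.integral_sub (f := fun t => t ^ n * q₁ t)
      (g := fun t => t ^ n * q₂ t)
      (((continuous_id.pow n).mul h₁).intervalIntegrable a s)
      (((continuous_id.pow n).mul h₂).intervalIntegrable a s),
      abs_div, abs_of_pos (pow_pos h0 n), div_le_iff₀ (pow_pos h0 n)]
    have hb := intervalIntegral.norm_integral_le_of_norm_le (μ := MeasureTheory.volume) hs
      (f := fun t => t ^ n * q₁ t - t ^ n * q₂ t)
      (g := fun t => s ^ n * M * exp (L * t)) (by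
        refine Eventually.of_forall fun t ht => ?_
        have h1 : 0 ≤ t := ha.trans ht.1.le
        rw [← mul_sub, norm_mul, Real.norm_eq_abs, Real.norm_eq_abs,
          abs_of_nonneg (pow_nonneg h1 n), mul_assoc]
        exact mul_le_mul (pow_le_pow_left₀ h1 ht.2 n) (hq t ⟨ht.1.le, ht.2⟩) (abs_nonneg _)
          (pow_nonneg h0.le n))
      (by apply Continuous.intervalIntegrable; fun_prop)
    rw [intervalIntegral.integral_const_mul, integral_exp_mul_aux hL.ne'] at hb
    rw [Real.norm_eq_abs] at hb
    refine hb.trans ?_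
    have : (exp (L * s) - exp (L * a)) / L ≤ exp (L * s) / L := by
      gcongr; linarith [exp_pos (L * a)]
    calc s ^ n * M * ((exp (L * s) - exp (L * a)) / L) ≤ s ^ n * M * (exp (L * s) / L) := by
          gcongr
      _ = M / L * exp (L * s) * s ^ n := by ring
  · subst h; simp; positivity

lemma contDiffOn_avgPrim {n : ℕ} {a b : ℝ} (ha : 0 ≤ a) (hab : a < b) {q : ℝ → ℝ}
    (hq : Continuous q) : ContDiffOn ℝ 1 (avgPrim n a q) (Icc a b) := by
  set w := avgPrim n a q with hw
  have hwc : Continuous w := continuous_avgPrim ha hq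
  -- the one-sided derivative at `a`: at the singular point `0` the averaging gives `q(0)/(n+1)`
  set e : ℝ := if a = 0 then q 0 / (n + 1) else q a - n / a * w a with he
  have hlim : Tendsto (fun r => q r - n / r * w r) (𝓝[>] a) (𝓝 e) := by
    rcases ha.lt_or_eq with h | h
    · have : ContinuousAt (fun r => q r - n / r * w r) a :=
        hq.continuousAt.sub ((continuousAt_const.div continuousAt_id h.ne').mul hwc.continuousAt)
      rw [he, if_neg h.ne']
      exact this.tendsto.mono_left nhdsWithin_le_nhds
    · subst h
      have hq0 : Tendsto q (𝓝[>] 0) (𝓝 (q 0)) := (hq.tendsto 0).mono_left nhdsWithin_le_nhds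
      have hdivlim : Tendsto (fun r => w r / r) (𝓝[>] 0) (𝓝 (q 0 / (n + 1))) := by
        have hP : ∀ r, HasDerivAt (fun s => ∫ t in (0:ℝ)..s, t ^ n * q t) (r ^ n * q r) r :=
          fun r => intervalIntegral.integral_hasDerivAt_right
            (((continuous_id.pow n).mul hq).intervalIntegrable 0 r)
            (((continuous_id.pow n).mul hq).stronglyMeasurableAtFilter _ _)
            ((continuous_id.pow n).mul hq).continuousAt
        have hL := HasDerivAt.lhopital_zero_nhdsGT (a := 0) (l := 𝓝 (q 0 / (n + 1)))
          (f := fun s => ∫ t in (0:ℝ)..s, t ^ n * q t) (f' := fun r => r ^ n * q r)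
          (g := fun r => r ^ (n + 1)) (g' := fun r => ((n + 1 : ℕ) : ℝ) * r ^ n)
          (Eventually.of_forall hP)
          (Eventually.of_forall fun r => by simpa using hasDerivAt_pow (n + 1) r)
          (by filter_upwards [self_mem_nhdsWithin] with r hr
              have : 0 < r := mem_Ioi.1 hr
              positivity)
          (by have := (hP 0).continuousAt.tendsto.mono_left
                (nhdsWithin_le_nhds (s := Ioi (0:ℝ)))
              simpa using this)
          (by have := ((continuous_pow (M := ℝ) (n + 1)).tendsto 0).mono_left
                (nhdsWithin_le_nhds (s := Ioi (0:ℝ)))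
              simpa using this)
          (by
            have h1 : Tendsto (fun r => q r / (n + 1)) (𝓝[>] (0:ℝ)) (𝓝 (q 0 / (n + 1))) :=
              hq0.div_const _
            refine h1.congr' ?_
            filter_upwards [self_mem_nhdsWithin] with r hr
            have : 0 < r := mem_Ioi.1 hr
            push_cast
            field_simp)
        refine hL.congr' ?_
        filter_upwards [self_mem_nhdsWithin] with r hr
        have h0 : 0 < r := mem_Ioi.1 hr
        simp only [hw, avgPrim, max_eq_left h0.le]
        field_simp
        ring
      have h2 := hq0.sub (hdivlim.const_mul (n : ℝ))
      rw [he, if_pos rfl]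
      have h3 : q 0 - n * (q 0 / (n + 1)) = q 0 / (n + 1) := by field_simp; ring
      rw [h3] at h2
      refine h2.congr' ?_
      filter_upwards [self_mem_nhdsWithin] with r hr
      have h0 : 0 < r := mem_Ioi.1 hr
      field_simp
  have hda : HasDerivWithinAt w e (Ici a) a := by
    refine hasDerivWithinAt_Ici_of_tendsto_deriv (s := Ioi a)
      (fun r hr => (hasDerivAt_avgPrim ha hq (mem_Ioi.1 hr)).differentiableAt.differentiableWithinAt)
      hwc.continuousWithinAt self_mem_nhdsWithin ?_
    refine hlim.congr' ?_
    filter_upwards [self_mem_nhdsWithin] with r hr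
    exact (hasDerivAt_avgPrim ha hq (mem_Ioi.1 hr)).deriv.symm
  set w1 : ℝ → ℝ := fun r => if r = a then e else q r - n / r * w r with hw1
  have hd : ∀ r ∈ Icc a b, HasDerivWithinAt w (w1 r) (Icc a b) r := by
    intro r hr
    rcases hr.1.lt_or_eq with h | h
    · simp only [hw1, if_neg h.ne']
      exact (hasDerivAt_avgPrim ha hq h).hasDerivWithinAt
    · subst h
      simp only [hw1, if_true]
      exact hda.mono Icc_subset_Ici_self
  have hc : ContinuousOn w1 (Icc a b) := by
    intro r hr
    rcases hr.1.lt_or_eq with h | h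
    · have h0 : 0 < r := ha.trans_lt h
      have : ContinuousAt (fun r => q r - n / r * w r) r :=
        hq.continuousAt.sub ((continuousAt_const.div continuousAt_id h0.ne').mul hwc.continuousAt)
      refine (this.congr ?_).continuousWithinAt
      filter_upwards [Ioi_mem_nhds h] with x hx
      simp [hw1, (mem_Ioi.1 hx).ne']
    · subst h
      rw [← continuousWithinAt_sdiff_self]
      have hle : 𝓝[Icc a b \ {a}] a ≤ 𝓝[>] a :=
        nhdsWithin_mono _ fun x hx => lt_of_le_of_ne hx.1.1 (Ne.symm hx.2)
      have := hlim.mono_left hle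
      simp only [ContinuousWithinAt, hw1, if_true]
      refine this.congr' ?_
      filter_upwards [self_mem_nhdsWithin] with x hx
      have hne : x ≠ a := hx.2
      rw [if_neg hne]
  have hu : UniqueDiffOn ℝ (Icc a b) := uniqueDiffOn_Icc hab
  rw [show (1 : WithTop ℕ∞) = 0 + 1 by simp, contDiffOn_succ_iff_derivWithin hu]
  refine ⟨fun r hr => (hd r hr).differentiableWithinAt, by simp, ?_⟩
  rw [contDiffOn_zero]
  exact hc.congr fun r hr => (hd r hr).derivWithin (hu r hr)

/-- Global well-posedness of the radial initial value problem `u(a) = δ`, `u'(a) = 0` for a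
globally Lipschitz nonlinearity, including the singular endpoint `a = 0`: a Banach fixed point for
`u(r) = δ + ∫ₐʳ s⁻ⁿ ∫ₐˢ tⁿ g(u(t)) dt ds` in the norm weighted by `exp(-L r)`. -/
theorem exists_ivp (n : ℕ) {a b : ℝ} (ha : 0 ≤ a) (hab : a < b) {g : ℝ → ℝ} {K : NNReal}
    (hg : LipschitzWith K g) :
    ∃ u v : ℝ → ℝ → ℝ, (∀ δ, Sol n a b g (u δ) (v δ) ∧ u δ a = δ ∧
      (∀ r, HasDerivAt (u δ) (v δ r) r) ∧ ContDiffOn ℝ 2 (u δ) (Icc a b)) ∧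
      Continuous (fun δ => v δ b) := by
  set L : ℝ := K + 1 with hLdef
  have hL : 0 < L := by positivity
  let X := C(Icc a b, ℝ)
  let ext : X → ℝ → ℝ := fun y => IccExtend hab.le y
  have hext : ∀ y : X, Continuous (ext y) := fun y => y.continuous.Icc_extend'
  let q : X → ℝ → ℝ := fun y t => g (exp (L * t) * ext y t)
  have hqc : ∀ y, Continuous (q y) := fun y => hg.continuous.comp
    ((continuous_exp.comp (continuous_const.mul continuous_id)).mul (hext y))
  let w : X → ℝ → ℝ := fun y => avgPrim n a (q y)
  have hwc : ∀ y, Continuous (w y) := fun y => continuous_avgPrim ha (hqc y)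
  let U : ℝ → X → ℝ → ℝ := fun δ y r => δ + ∫ s in a..r, w y s
  have hUd : ∀ δ y r, HasDerivAt (U δ y) (w y r) r := fun δ y r =>
    (intervalIntegral.integral_hasDerivAt_right ((hwc y).intervalIntegrable a r)
      ((hwc y).stronglyMeasurableAtFilter _ _) (hwc y).continuousAt).const_add δ
  have hUc : ∀ δ y, Continuous (U δ y) := fun δ y =>
    continuous_iff_continuousAt.2 fun r => (hUd δ y r).continuousAt
  let T : ℝ → X → X := fun δ y => ⟨fun r => exp (-(L * r)) * U δ y r, by
    exact (continuous_exp.comp ((continuous_const.mul continuous_subtype_val).neg)).mul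
      ((hUc δ y).comp continuous_subtype_val)⟩
  have hTapp : ∀ δ y (r : Icc a b), T δ y r = exp (-(L * r)) * (δ + ∫ s in a..(r:ℝ), w y s) :=
    fun _ _ _ => rfl
  have hqd : ∀ y z : X, ∀ t ∈ Icc a b, |q y t - q z t| ≤ K * dist y z * exp (L * t) := by
    intro y z t ht
    have h1 := hg.dist_le_mul (exp (L * t) * ext y t) (exp (L * t) * ext z t)
    rw [Real.dist_eq, Real.dist_eq, ← mul_sub, abs_mul, abs_of_pos (exp_pos _)] at h1
    have h2 : |ext y t - ext z t| ≤ dist y z := by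
      have := ContinuousMap.dist_apply_le_dist (f := y) (g := z) ⟨t, ht⟩
      simpa [ext, IccExtend_of_mem hab.le _ ht, Real.dist_eq] using this
    calc |q y t - q z t| ≤ K * (exp (L * t) * |ext y t - ext z t|) := h1
      _ ≤ K * (exp (L * t) * dist y z) := by gcongr
      _ = _ := by ring
  have hwd : ∀ y z : X, ∀ s ∈ Icc a b,
      |w y s - w z s| ≤ K * dist y z / L * exp (L * s) := fun y z s hs =>
    avgPrim_sub_le ha (hqc y) (hqc z) hL (by positivity) hs.1
      fun t ht => hqd y z t ⟨ht.1, ht.2.trans hs.2⟩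
  have hKL : (K : ℝ) / L / L ≤ 1 / 2 := by
    rw [div_div, div_le_div_iff₀ (by positivity) (by norm_num)]
    have : (0:ℝ) ≤ K := K.2
    nlinarith [sq_nonneg ((K:ℝ) - 1)]
  have hT : ∀ δ, ContractingWith (1/2) (T δ) := by
    intro δ
    refine ⟨by rw [div_lt_one] <;> norm_num, LipschitzWith.of_dist_le_mul fun y z => ?_⟩
    rw [ContinuousMap.dist_le (by positivity)]
    intro r
    have hb := intervalIntegral.norm_integral_le_of_norm_le (μ := MeasureTheory.volume) r.2.1
      (f := fun s => w y s - w z s)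
      (g := fun s => K * dist y z / L * exp (L * s)) (by
        refine Eventually.of_forall fun t ht => ?_
        exact hwd y z t ⟨ht.1.le, ht.2.trans r.2.2⟩)
      (by apply Continuous.intervalIntegrable; fun_prop)
    rw [intervalIntegral.integral_const_mul, integral_exp_mul_aux hL.ne',
      intervalIntegral.integral_sub ((hwc y).intervalIntegrable a r)
        ((hwc z).intervalIntegrable a r), Real.norm_eq_abs] at hb
    have hTd : dist (T δ y r) (T δ z r)
        = exp (-(L * r)) * |(∫ s in a..(r:ℝ), w y s) - ∫ s in a..(r:ℝ), w z s| := by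
      rw [Real.dist_eq, hTapp, hTapp, ← mul_sub, abs_mul, abs_of_pos (exp_pos _), add_sub_add_left_eq_sub]
    rw [hTd]
    have h3 : (exp (L * r) - exp (L * a)) / L ≤ exp (L * r) / L := by
      gcongr; linarith [exp_pos (L * a)]
    have h4 : exp (-(L * (r:ℝ))) * exp (L * r) = 1 := by rw [← exp_add]; simp
    calc exp (-(L * r)) * |(∫ s in a..(r:ℝ), w y s) - ∫ s in a..(r:ℝ), w z s|
        ≤ exp (-(L * r)) * (K * dist y z / L * (exp (L * r) / L)) := by
          gcongr
          exact hb.trans (by gcongr)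
      _ = (exp (-(L * r)) * exp (L * r)) * (K / L / L) * dist y z := by ring
      _ ≤ 1 * (1 / 2) * dist y z := by rw [h4]; gcongr
      _ = _ := by simp
  let y : ℝ → X := fun δ => (hT δ).fixedPoint
  have hy : ∀ δ, T δ (y δ) = y δ := fun δ => (hT δ).fixedPoint_isFixedPt
  have hyU : ∀ δ, ∀ t ∈ Icc a b, exp (L * t) * ext (y δ) t = U δ (y δ) t := by
    intro δ t ht
    have h1 : (T δ (y δ)) ⟨t, ht⟩ = y δ ⟨t, ht⟩ := by rw [hy]
    simp only [ext, IccExtend_of_mem hab.le _ ht]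
    rw [← h1, hTapp, ← mul_assoc, ← exp_add]; simp [U]
  have hlip : ∀ δ ε, dist (y δ) (y ε) ≤ 2 * |δ - ε| := by
    intro δ ε
    have := (hT δ).dist_fixedPoint_fixedPoint_of_dist_le' (T ε) (hy δ) (hy ε) (C := |δ - ε|) (by
      intro z
      rw [ContinuousMap.dist_le (abs_nonneg _)]
      intro r
      rw [Real.dist_eq, hTapp, hTapp, ← mul_sub, abs_mul, abs_of_pos (exp_pos _), add_sub_add_right_eq_sub]
      have : exp (-(L * (r:ℝ))) ≤ 1 := by
        rw [exp_le_one_iff]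
        have : 0 ≤ (r:ℝ) := ha.trans r.2.1
        have := mul_nonneg hL.le this
        linarith
      nlinarith [abs_nonneg (δ - ε)])
    refine this.trans (le_of_eq ?_)
    norm_num
    ring
  refine ⟨fun δ => U δ (y δ), fun δ => w (y δ), fun δ => ⟨⟨(hUc _ _).continuousOn,
    (hwc _).continuousOn, fun r _ => hUd _ _ r, ?_, avgPrim_left⟩, by simp [U], hUd _ _, ?_⟩, ?_⟩
  · intro r hr
    have := hasDerivAt_avgPrim (n := n) ha (hqc (y δ)) hr.1
    have h2 : q (y δ) r = g (U δ (y δ) r) := by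
      simp only [q]; rw [hyU δ r ⟨hr.1.le, hr.2.le⟩]
    rw [h2] at this
    exact this
  · have hu : UniqueDiffOn ℝ (Icc a b) := uniqueDiffOn_Icc hab
    rw [show (2 : WithTop ℕ∞) = 1 + 1 by norm_num, contDiffOn_succ_iff_derivWithin hu]
    refine ⟨fun r _ => (hUd δ (y δ) r).differentiableAt.differentiableWithinAt, by simp, ?_⟩
    exact (contDiffOn_avgPrim ha hab (hqc (y δ))).congr fun r hr =>
      (hUd δ (y δ) r).hasDerivWithinAt.derivWithin (hu r hr)
  · have hLip : ∀ δ ε, |w (y δ) b - w (y ε) b| ≤ K / L * exp (L * b) * 2 * |δ - ε| := by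
      intro δ ε
      refine (hwd (y δ) (y ε) b ⟨hab.le, le_rfl⟩).trans ?_
      calc K * dist (y δ) (y ε) / L * exp (L * b) = K / L * exp (L * b) * dist (y δ) (y ε) := by ring
        _ ≤ K / L * exp (L * b) * (2 * |δ - ε|) := by gcongr; exact hlip δ ε
        _ = _ := by ring
    have : LipschitzWith (Real.toNNReal (K / L * exp (L * b) * 2)) (fun δ => w (y δ) b) := by
      refine LipschitzWith.of_dist_le_mul fun δ ε => ?_
      rw [Real.dist_eq, Real.dist_eq, Real.coe_toNNReal _ (by positivity)]
      exact hLip δ ε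
    exact this.continuous

/-! ### The truncated power nonlinearity -/

/-- The power `x ↦ x ^ p`, frozen outside `[0,2]` to make it globally Lipschitz. -/
noncomputable def truncPow (p x : ℝ) : ℝ := (max 0 (min x 2)) ^ p

lemma truncPow_nonneg (p x : ℝ) : 0 ≤ truncPow p x := rpow_nonneg (le_max_left _ _) _

lemma truncPow_eq {p x : ℝ} (h0 : 0 ≤ x) (h2 : x ≤ 2) : truncPow p x = x ^ p := by
  rw [truncPow, min_eq_left h2, max_eq_right h0]

lemma truncPow_le {p x l : ℝ} (hp : 0 ≤ p) (hl : 0 ≤ l) (hx : x ≤ l) : truncPow p x ≤ l ^ p :=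
  rpow_le_rpow (le_max_left _ _) (max_le hl ((min_le_left _ _).trans hx)) hp

lemma lipschitz_sub_truncPow {p : ℝ} (hp : 1 ≤ p) :
    ∃ K : NNReal, LipschitzWith K (fun x => x - truncPow p x) := by
  have h1 : LipschitzOnWith (Real.toNNReal (p * 2 ^ (p - 1))) (fun x : ℝ => x ^ p) (Icc 0 2) := by
    refine Convex.lipschitzOnWith_of_nnnorm_hasDerivWithin_le (convex_Icc 0 2)
      (fun x _ => (Real.hasDerivAt_rpow_const (Or.inr hp)).hasDerivWithinAt) ?_
    intro x hx
    rw [← NNReal.coe_le_coe, coe_nnnorm, Real.coe_toNNReal _ (by positivity), Real.norm_eq_abs,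
      abs_of_nonneg (mul_nonneg (by linarith) (rpow_nonneg hx.1 _))]
    gcongr
    · exact hx.1
    · exact hx.2
  have h2 : LipschitzWith 1 (fun x : ℝ => max 0 (min x 2)) :=
    (LipschitzWith.id.min_const 2).const_max 0
  have h3 : LipschitzWith (Real.toNNReal (p * 2 ^ (p - 1)) * 1) (truncPow p) := by
    rw [← lipschitzOnWith_univ] at h2 ⊢
    exact h1.comp h2 fun x _ => ⟨le_max_left _ _, max_le (by norm_num) (min_le_right _ _)⟩
  exact ⟨_, LipschitzWith.id.sub h3⟩

/-! ### Wronskian identities and the linear regime -/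

lemma hasDerivAt_pow_mul {n : ℕ} {v : ℝ → ℝ} {r x : ℝ} (hr : 0 < r)
    (dv : HasDerivAt v (x - n / r * v r) r) :
    HasDerivAt (fun r => r ^ n * v r) (r ^ n * x) r := by
  refine ((hasDerivAt_pow n r).mul dv).congr_deriv ?_
  rcases n with _ | n
  · simp
  · field_simp
    simp [pow_succ]
    ring

lemma hasDerivAt_wronskian {n : ℕ} {u v φ φ1 : ℝ → ℝ} {r x : ℝ} (hr : 0 < r)
    (du : HasDerivAt u (v r) r) (dv : HasDerivAt v (x - n / r * v r) r)
    (dφ : HasDerivAt φ (φ1 r) r) (dφ1 : HasDerivAt φ1 (φ r - n / r * φ1 r) r) :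
    HasDerivAt (fun r => r ^ n * (v r * φ r - u r * φ1 r)) (r ^ n * (x - u r) * φ r) r := by
  have h1 := (hasDerivAt_pow_mul hr dv).mul dφ
  have h2 := du.mul (hasDerivAt_pow_mul hr dφ1)
  have h3 := h1.sub h2
  refine (h3.congr_of_eventuallyEq (Eventually.of_forall fun y => ?_)).congr_deriv ?_
  · simp only [Pi.mul_apply, Pi.sub_apply]; ring
  · ring

/-- As long as the nonlinear term is at most `ε`, the solution follows the linear solution `φ`
with an error of order `ε`. -/
lemma linear_regime {n : ℕ} {a b : ℝ} (ha : 0 ≤ a) (hb : b ≤ 1) {φ φ1 u v : ℝ → ℝ}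
    (hφ : Sol n a b id φ φ1) {k K : ℝ} (hk : 0 < k)
    (hkK : ∀ r ∈ Icc a b, k ≤ φ r ∧ φ r ≤ K) {p ε τ : ℝ}
    (hu : Sol n a b (fun x => x - truncPow p x) u v) (hτ : τ ∈ Icc a b)
    (hf : ∀ r ∈ Icc a τ, truncPow p (u r) ≤ ε) :
    ∀ r ∈ Icc a τ, u r ≤ u a / φ a * φ r ∧ (u a / φ a - K / k ^ 2 * ε) * φ r ≤ u r ∧
      -(K * ε) ≤ v r * φ r - u r * φ1 r ∧ v r * φ r - u r * φ1 r ≤ 0 := by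
  have hε : 0 ≤ ε := (truncPow_nonneg _ _).trans (hf a ⟨le_rfl, hτ.1⟩)
  have hK : 0 < K := hk.trans_le ((hkK τ hτ).1.trans (hkK τ hτ).2)
  have hsub : ∀ {r}, r ∈ Icc a τ → Icc a r ⊆ Icc a b := fun hr x hx =>
    ⟨hx.1, hx.2.trans (hr.2.trans hτ.2)⟩
  have hcB : ContinuousOn (fun r => r ^ n * (v r * φ r - u r * φ1 r)) (Icc a b) :=
    (continuousOn_id.pow n).mul ((hu.cv.mul hφ.cu).sub (hu.cu.mul hφ.cv))
  have hdB : ∀ r ∈ Ioo a b, HasDerivAt (fun r => r ^ n * (v r * φ r - u r * φ1 r))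
      (r ^ n * (u r - truncPow p (u r) - u r) * φ r) r := fun r hr =>
    hasDerivAt_wronskian (ha.trans_lt hr.1) (hu.du r hr) (hu.dv r hr) (hφ.du r hr)
      (by simpa using hφ.dv r hr)
  have hD : ∀ r ∈ Icc a τ, -(K * ε) ≤ v r * φ r - u r * φ1 r ∧ v r * φ r - u r * φ1 r ≤ 0 := by
    intro r hr
    rcases hr.1.lt_or_eq with h | h
    · have h0 : 0 < r := ha.trans_lt h
      have hIoo : ∀ {x}, x ∈ Ioo a r → x ∈ Ioo a b := fun hx =>
        ⟨hx.1, hx.2.trans_le (hr.2.trans hτ.2)⟩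
      have hpn := pow_pos h0 n
      have h1 := le_of_hasDerivAt_nonneg (f := fun r => -(r ^ n * (v r * φ r - u r * φ1 r)))
        (f' := fun r => -(r ^ n * (u r - truncPow p (u r) - u r) * φ r)) h.le
        (hcB.neg.mono (hsub hr)) (fun x hx => (hdB x (hIoo hx)).neg) (by
          intro x hx
          have hx0 : 0 < x := ha.trans_lt hx.1
          have h3 := (hkK x (Ioo_subset_Icc_self (hIoo hx))).1
          have h4 := truncPow_nonneg p (u x)
          have h5 : 0 ≤ x ^ n * truncPow p (u x) * φ x := by
            have := hk.trans_le h3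
            positivity
          linarith)
      have h2 := le_of_hasDerivAt_nonneg
        (f := fun r => r ^ n * (v r * φ r - u r * φ1 r) + K * ε * r ^ (n + 1))
        (f' := fun r => r ^ n * (u r - truncPow p (u r) - u r) * φ r
          + K * ε * (((n + 1 : ℕ) : ℝ) * r ^ n)) h.le
        ((hcB.mono (hsub hr)).add (continuousOn_const.mul (continuousOn_id.pow (n + 1))))
        (fun x hx => (hdB x (hIoo hx)).add (by simpa using (hasDerivAt_pow (n + 1) x).const_mul (K * ε)))
        (by
          intro x hx
          have hx0 : 0 < x := ha.trans_lt hx.1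
          obtain ⟨h3, h3'⟩ := hkK x (Ioo_subset_Icc_self (hIoo hx))
          have h4 := hf x ⟨hx.1.le, hx.2.le.trans hr.2⟩
          have h5 : truncPow p (u x) * φ x ≤ ε * K :=
            mul_le_mul h4 h3' (hk.le.trans h3) hε
          have h6 := mul_le_mul_of_nonneg_left h5 (pow_pos hx0 n).le
          have h7 : 0 ≤ K * ε * ((n : ℝ) * x ^ n) := by positivity
          push_cast
          linarith)
      simp only [hu.va, hφ.va] at h1 h2
      have h3 : 0 ≤ K * ε * a ^ (n + 1) := by positivity
      constructor
      · have h4 : r ^ n * (-(K * ε)) ≤ r ^ n * (v r * φ r - u r * φ1 r) := by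
          have h5 : K * ε * r ^ (n + 1) ≤ K * ε * r ^ n := by
            rw [pow_succ]
            have : r ^ n * r ≤ r ^ n * 1 := by
              gcongr; exact hr.2.trans (hτ.2.trans hb)
            nlinarith [mul_nonneg hK.le hε]
          linarith
        exact le_of_mul_le_mul_left h4 hpn
      · have h4 : r ^ n * (v r * φ r - u r * φ1 r) ≤ r ^ n * 0 := by linarith
        exact le_of_mul_le_mul_left h4 hpn
    · subst h
      simp [hu.va, hφ.va]
      positivity
  have hφpos : ∀ r ∈ Icc a b, 0 < φ r := fun r hr => hk.trans_le (hkK r hr).1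
  have hcq : ContinuousOn (fun r => u r / φ r) (Icc a b) :=
    hu.cu.div hφ.cu fun r hr => (hφpos r hr).ne'
  have hdq : ∀ r ∈ Ioo a b, HasDerivAt (fun r => u r / φ r)
      ((v r * φ r - u r * φ1 r) / φ r ^ 2) r := fun r hr =>
    (hu.du r hr).div (hφ.du r hr) (hφpos r (Ioo_subset_Icc_self hr)).ne'
  intro r hr
  have hIoo : ∀ {x}, x ∈ Ioo a r → x ∈ Ioo a b := fun hx =>
    ⟨hx.1, hx.2.trans_le (hr.2.trans hτ.2)⟩
  have hIcc : ∀ {x}, x ∈ Ioo a r → x ∈ Icc a τ := fun hx =>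
    ⟨hx.1.le, hx.2.le.trans hr.2⟩
  have hr0 := hφpos r (hsub hr ⟨hr.1, le_rfl⟩)
  refine ⟨?_, ?_, hD r hr⟩
  · have h1 := le_of_hasDerivAt_nonneg (f := fun r => -(u r / φ r)) hr.1 (hcq.neg.mono (hsub hr))
      (fun x hx => (hdq x (hIoo hx)).neg) (by
        intro x hx
        have := (hD x (hIcc hx)).2
        have h2 := hφpos x (Ioo_subset_Icc_self (hIoo hx))
        rw [neg_nonneg]
        exact div_nonpos_of_nonpos_of_nonneg this (by positivity))
    rw [← div_le_iff₀ hr0]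
    linarith
  · have h1 := le_of_hasDerivAt_nonneg (f := fun r => u r / φ r + K / k ^ 2 * ε * r)
      (f' := fun r => (v r * φ r - u r * φ1 r) / φ r ^ 2 + K / k ^ 2 * ε) hr.1
      ((hcq.mono (hsub hr)).add (continuousOn_const.mul continuousOn_id))
      (fun x hx => (hdq x (hIoo hx)).add (by
        simpa using (hasDerivAt_id x).const_mul (K / k ^ 2 * ε))) (by
        intro x hx
        have h3 := (hD x (hIcc hx)).1
        have h4 := (hkK x (Ioo_subset_Icc_self (hIoo hx))).1
        have h5 := hφpos x (Ioo_subset_Icc_self (hIoo hx))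
        have h6 : -(K * ε) / k ^ 2 ≤ (v x * φ x - u x * φ1 x) / φ x ^ 2 := by
          calc -(K * ε) / k ^ 2 ≤ -(K * ε) / φ x ^ 2 := by
                rw [neg_div, neg_div, neg_le_neg_iff]; gcongr
            _ ≤ _ := by gcongr
        have h7 : -(K * ε) / k ^ 2 = -(K / k ^ 2 * ε) := by ring
        linarith)
    rw [← le_div_iff₀ hr0]
    have h2 : r ≤ 1 := hr.2.trans (hτ.2.trans hb)
    have h3 : 0 ≤ K / k ^ 2 * ε := by positivity
    nlinarith [mul_nonneg h3 ha, mul_nonneg h3 (sub_nonneg.2 h2)]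

/-! ### The inner layer -/

/-- The energy `v²/2 - u²/2 + u^{p+1}/(p+1)` of the autonomous equation `u'' = u - u^p`. -/
noncomputable def energy (p : ℝ) (u v : ℝ → ℝ) (r : ℝ) : ℝ :=
  v r ^ 2 / 2 - u r ^ 2 / 2 + u r ^ (p + 1) / (p + 1)

lemma hasDerivAt_energy {n : ℕ} {a b p : ℝ} (hp : 1 < p) {u v : ℝ → ℝ}
    (hu : Sol n a b (fun x => x - truncPow p x) u v) {r : ℝ} (hr : r ∈ Ioo a b)
    (h0 : 0 ≤ u r) (h2 : u r ≤ 2) :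
    HasDerivAt (energy p u v) (-(n / r * v r ^ 2)) r := by
  have hf : HasDerivAt (fun x => u x ^ (p + 1)) (v r * (p + 1) * u r ^ (p + 1 - 1)) r :=
    (hu.du r hr).rpow_const (Or.inr (by linarith))
  have h := ((((hu.dv r hr).pow 2).div_const 2).sub (((hu.du r hr).pow 2).div_const 2)).add
    (hf.div_const (p + 1))
  refine h.congr_deriv ?_
  have hp1 : p + 1 ≠ 0 := by linarith
  rw [truncPow_eq h0 h2]
  field_simp
  simp
  ring

lemma continuousOn_energy {n : ℕ} {a b p : ℝ} (hp : 1 < p) {u v : ℝ → ℝ}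
    (hu : Sol n a b (fun x => x - truncPow p x) u v) : ContinuousOn (energy p u v) (Icc a b) :=
  (((hu.cv.pow 2).div_const 2).sub ((hu.cu.pow 2).div_const 2)).add
    ((hu.cu.rpow_const fun _ _ => Or.inr (by linarith)).div_const _)

set_option maxHeartbeats 1000000 in
/-- Control of a solution that enters the strip `u ≥ l` at `t₁`, as long as it stays there: it
does not exceed `h`, its slope is bounded by `M`, the energy loss is of the order of the width
`h - l` of the strip, and so is the time spent there. -/
lemma hump_bounds {n : ℕ} {a b : ℝ} (ha : 0 ≤ a) (hb : b ≤ 1) {p : ℝ} (hp : 1 < p)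
    {u v : ℝ → ℝ} (hu : Sol n a b (fun x => x - truncPow p x) u v)
    {t₁ T l h r₀ M₀ M k C : ℝ} (hr₀ : 0 < r₀) (ht₁ : r₀ ≤ t₁) (hat : a < t₁) (hT : t₁ ≤ T)
    (hTb : T ≤ b)
    (hl : 0 < l) (hl1 : l < 1) (hh : 1 < h) (hh2 : h ≤ 2) (hM₀ : |v t₁| ≤ M₀)
    (hF : M₀ ^ 2 / 2 + 3 < h ^ (p + 1) / (p + 1)) (hut : u t₁ = l)
    (hul : ∀ r ∈ Icc t₁ T, l ≤ u r) (hM : M = M₀ + 2) (hk : k = n / r₀) (hC : C = 2 + k * M) :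
    u T ≤ h ∧ |v T| ≤ M ∧ energy p u v T ≤ energy p u v t₁ ∧
      energy p u v t₁ - k * (h - l) * (3 * M + C) ≤ energy p u v T ∧
      (v t₁ ^ 2 - 2 * k * (h - l) * (3 * M + C)) * (T - t₁) ≤
        ((h - l) + 4 / (p + 1)) * (3 * M + C) := by
  have hM₀0 : 0 ≤ M₀ := (abs_nonneg _).trans hM₀
  have hk0 : 0 ≤ k := by rw [hk]; positivity
  have hv1 : v t₁ ^ 2 ≤ M₀ ^ 2 := by rw [← sq_abs]; gcongr
  have hp1 : 0 < p + 1 := by linarith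
  have hFl : l ^ (p + 1) / (p + 1) ≤ 1 := by
    rw [div_le_one hp1]
    exact (rpow_le_one hl.le hl1.le hp1.le).trans (by linarith)
  have hF0 : ∀ {x : ℝ}, 0 ≤ x → 0 ≤ x ^ (p + 1) / (p + 1) := fun hx => by positivity
  have hsub : ∀ {y}, y ≤ T → Icc t₁ y ⊆ Icc a b := fun hy x hx =>
    ⟨hat.le.trans hx.1, hx.2.trans (hy.trans hTb)⟩
  have hIoo : ∀ {x y}, y ≤ T → x ∈ Ioo t₁ y → x ∈ Ioo a b := fun hy hx =>
    ⟨hat.trans hx.1, hx.2.trans_le (hy.trans hTb)⟩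
  -- the energy decreases as long as the truncation is inactive
  have hE : ∀ y ∈ Icc t₁ T, (∀ r ∈ Ioo t₁ y, u r ≤ 2) → energy p u v y ≤ energy p u v t₁ := by
    intro y hy h2
    have := le_of_hasDerivAt_nonneg (f := fun r => -energy p u v r) hy.1
      ((continuousOn_energy hp hu).neg.mono (hsub hy.2))
      (fun x hx => (hasDerivAt_energy hp hu (hIoo hy.2 hx)
        (hl.le.trans (hul x ⟨hx.1.le, hx.2.le.trans hy.2⟩)) (h2 x hx)).neg) (by
        intro x hx
        have : 0 < x := ha.trans_lt (hat.trans hx.1)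
        rw [neg_neg]
        positivity)
    linarith
  have hE1 : energy p u v t₁ ≤ M₀ ^ 2 / 2 + 1 := by
    rw [energy, hut]
    nlinarith [sq_nonneg l]
  have huh : ∀ r ∈ Icc t₁ T, u r ≤ h := by
    intro r hr
    by_contra hcon
    push Not at hcon
    obtain ⟨t, ht, hth, hlt⟩ := exists_first_hit hr.1 (hu.cu.mono (hsub hr.2))
      (by rw [hut]; linarith : u t₁ < h) hcon.le
    have htT : t ∈ Icc t₁ T := ⟨ht.1.le, ht.2.trans hr.2⟩
    have h1 := hE t htT fun x hx => (hlt x ⟨hx.1.le, hx.2⟩).le.trans hh2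
    rw [energy, hth] at h1
    nlinarith [sq_nonneg (v t)]
  have hEr : ∀ y ∈ Icc t₁ T, energy p u v y ≤ energy p u v t₁ := fun y hy =>
    hE y hy fun r hr => (huh r ⟨hr.1.le, hr.2.le.trans hy.2⟩).trans hh2
  have hvM : ∀ r ∈ Icc t₁ T, |v r| ≤ M := by
    intro r hr
    have h1 := hEr r hr
    have h2 := huh r hr
    have h3 := hul r hr
    have h4 : l ^ (p + 1) / (p + 1) ≤ u r ^ (p + 1) / (p + 1) := by gcongr
    rw [energy, energy, hut] at h1
    refine abs_le_of_sq_le_sq ?_ (by linarith : (0:ℝ) ≤ M)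
    rw [hM]
    nlinarith
  have hH : 0 < h - l := by linarith
  have hM0 : 0 ≤ M := by linarith
  have hC0 : 0 ≤ C := by rw [hC]; positivity
  have hgc : ContinuousOn (fun r => (u r - l) * v r) (Icc t₁ T) :=
    ((hu.cu.sub continuousOn_const).mul hu.cv).mono (hsub le_rfl)
  have hvc := hu.cv.mono (hsub le_rfl)
  have hgd : ∀ r ∈ Ioo t₁ T, HasDerivAt (fun r => (u r - l) * v r)
      (v r ^ 2 + (u r - l) * (u r - truncPow p (u r) - n / r * v r)) r := fun r hr =>
    (((hu.du r (hIoo le_rfl hr)).sub_const l).mul (hu.dv r (hIoo le_rfl hr))).congr_deriv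
      (by simp; ring)
  -- `f ≤ C - v'`, and consequently `v² ≤ (g v)' + (h - l) (C - v')` with `g = u - l`
  have hfC : ∀ r ∈ Ioo t₁ T, truncPow p (u r) ≤
      C - (u r - truncPow p (u r) - n / r * v r) := by
    intro r hr
    have hr' := Ioo_subset_Icc_self hr
    have h1 : |n / r * v r| ≤ k * M := by
      rw [abs_mul]
      have h0 : 0 < r := hr₀.trans_le (ht₁.trans hr.1.le)
      rw [abs_of_nonneg (by positivity)]
      have : (n : ℝ) / r ≤ k := by
        rw [hk]
        gcongr
        exact ht₁.trans hr.1.le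
      exact mul_le_mul this (hvM r hr') (abs_nonneg _) hk0
    have h2 := huh r hr'
    have := (abs_le.1 h1).1
    rw [hC]
    linarith
  have hv2 : ∀ r ∈ Ioo t₁ T, v r ^ 2 ≤
      (v r ^ 2 + (u r - l) * (u r - truncPow p (u r) - n / r * v r)) +
        (h - l) * (C - (u r - truncPow p (u r) - n / r * v r)) := by
    intro r hr
    have hr' := Ioo_subset_Icc_self hr
    have h1 := hfC r hr
    have h2 := truncPow_nonneg p (u r)
    have h3 := hul r hr'
    have h4 := huh r hr'
    set w := u r - truncPow p (u r) - n / r * v r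
    have h5 : 0 ≤ (h - u r) * (C - w) := mul_nonneg (by linarith) (by linarith)
    have h6 : 0 ≤ (u r - l) * C := mul_nonneg (by linarith) hC0
    nlinarith
  have hloss : ∀ y ∈ Icc t₁ T,
      energy p u v t₁ - k * (h - l) * (3 * M + C) ≤ energy p u v y := by
    intro y hy
    have hs : Icc t₁ y ⊆ Icc t₁ T := Icc_subset_Icc_right hy.2
    have h1 := le_of_hasDerivAt_nonneg
      (f := fun r => energy p u v r + k * ((u r - l) * v r) + k * (h - l) * (C * r - v r))
      (f' := fun r => -(n / r * v r ^ 2) +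
        k * (v r ^ 2 + (u r - l) * (u r - truncPow p (u r) - n / r * v r)) +
        k * (h - l) * (C - (u r - truncPow p (u r) - n / r * v r))) hy.1
      (((((continuousOn_energy hp hu).mono (hsub le_rfl)).add (continuousOn_const.mul hgc)).add
        (continuousOn_const.mul ((continuousOn_const.mul continuousOn_id).sub hvc))).mono hs)
      (fun r hr => by
        have hr' : r ∈ Ioo t₁ T := ⟨hr.1, hr.2.trans_le hy.2⟩
        have hrI := Ioo_subset_Icc_self hr'
        exact ((hasDerivAt_energy hp hu (hIoo le_rfl hr') (hl.le.trans (hul r hrI))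
          ((huh r hrI).trans hh2)).add ((hgd r hr').const_mul k)).add
          ((((hasDerivAt_id r).const_mul C).congr_deriv (mul_one C) |>.sub
            (hu.dv r (hIoo le_rfl hr'))).const_mul (k * (h - l))))
      (fun r hr => by
        have hr' : r ∈ Ioo t₁ T := ⟨hr.1, hr.2.trans_le hy.2⟩
        have h3 := mul_le_mul_of_nonneg_left (hv2 r hr') hk0
        have h4 : (n : ℝ) / r ≤ k := by
          rw [hk]
          gcongr
          exact ht₁.trans hr.1.le
        have h5 := mul_le_mul_of_nonneg_right h4 (sq_nonneg (v r))
        linarith)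
    simp only [hut] at h1
    have h2 := abs_le.1 (hvM y hy)
    have h3 := abs_le.1 (hvM t₁ ⟨le_rfl, hT⟩)
    have h4 := huh y hy
    have h5 := hul y hy
    have h6 : (u y - l) * v y ≤ (h - l) * M :=
      (mul_le_mul_of_nonneg_left h2.2 (by linarith)).trans
        (mul_le_mul_of_nonneg_right (by linarith) hM0)
    have h7 : y - t₁ ≤ 1 := by linarith [hy.2]
    have h8 := mul_le_mul_of_nonneg_left h6 hk0
    have h9 : (C * y - v y) - (C * t₁ - v t₁) ≤ C + 2 * M := by
      nlinarith
    have h10 := mul_le_mul_of_nonneg_left h9 (mul_nonneg hk0 hH.le)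
    nlinarith
  have hTm : T ∈ Icc t₁ T := ⟨hT, le_rfl⟩
  refine ⟨huh T hTm, hvM T hTm, hEr T hTm, hloss T hTm, ?_⟩
  set c := v t₁ ^ 2 - 2 * k * (h - l) * (3 * M + C) with hc
  have h1 := le_of_hasDerivAt_nonneg
    (f := fun r => (u r - l) * v r + ((h - l) + 4 / (p + 1)) * (C * r - v r) - c * r)
    (f' := fun r => (v r ^ 2 + (u r - l) * (u r - truncPow p (u r) - n / r * v r)) +
        ((h - l) + 4 / (p + 1)) * (C - (u r - truncPow p (u r) - n / r * v r)) - c) hT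
      ((hgc.add (continuousOn_const.mul ((continuousOn_const.mul continuousOn_id).sub hvc))).sub
        (continuousOn_const.mul continuousOn_id))
      (fun r hr => ((hgd r hr).add
          ((((hasDerivAt_id r).const_mul C).congr_deriv (mul_one C) |>.sub
            (hu.dv r (hIoo le_rfl hr))).const_mul _)).sub
          (((hasDerivAt_id r).const_mul c).congr_deriv (mul_one c)))
      (fun r hr => by
        have hr' := Ioo_subset_Icc_self hr
        have h3 := hv2 r hr
        have h4 := hloss r hr'
        have h5 := hfC r hr
        have h6 := hul r hr'
        have h7 := (huh r hr').trans hh2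
        have h0 : 0 < u r := hl.trans_le h6
        rw [energy, energy, hut] at h4
        have h8 := hF0 hl.le
        have h9 : u r ^ (p + 1) / (p + 1) ≤ 2 * truncPow p (u r) / (p + 1) := by
          rw [truncPow_eq h0.le h7, rpow_add_one h0.ne', mul_comm 2]
          gcongr
        have h10 : 2 * truncPow p (u r) / (p + 1) ≤ 2 / (p + 1) *
            (C - (u r - truncPow p (u r) - n / r * v r)) := by
          rw [mul_div_right_comm]
          gcongr
        have h11 : 4 / (p + 1) * (C - (u r - truncPow p (u r) - n / r * v r)) =
          2 * (2 / (p + 1) * (C - (u r - truncPow p (u r) - n / r * v r))) := by ring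
        have h12 : l ^ 2 ≤ u r ^ 2 := by gcongr
        rw [add_mul (h - l)]
        linarith)
  simp only [hut] at h1
  have h2 := abs_le.1 (hvM T hTm)
  have h3 := abs_le.1 (hvM t₁ ⟨le_rfl, hT⟩)
  have h4 := huh T hTm
  have h5 := hul T hTm
  have hp4 : 0 < 4 / (p + 1) := by positivity
  have h6 : (u T - l) * v T ≤ ((h - l) + 4 / (p + 1)) * M :=
    (mul_le_mul_of_nonneg_left h2.2 (by linarith)).trans
      (mul_le_mul_of_nonneg_right (by linarith) hM0)
  have h7 : T - t₁ ≤ 1 := by linarith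
  have h9 : (C * T - v T) - (C * t₁ - v t₁) ≤ C + 2 * M := by
    nlinarith
  have h10 := mul_le_mul_of_nonneg_left h9 (by linarith : 0 ≤ (h - l) + 4 / (p + 1))
  nlinarith

/-- A function starting positive, ending negative, whose derivative is negative at each of its
zeros, changes sign exactly once. -/
lemma exists_unique_sign_change {v v' : ℝ → ℝ} {x y : ℝ} (hxy : x < y)
    (hc : ContinuousOn v (Icc x y)) (hd : ∀ r ∈ Icc x y, HasDerivAt v (v' r) r)
    (hx : 0 < v x) (hy : v y < 0) (hz : ∀ r ∈ Icc x y, v r = 0 → v' r < 0) :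
    ∃ α ∈ Ioo x y, v α = 0 ∧ (∀ r ∈ Ico x α, 0 < v r) ∧ ∀ r ∈ Ioc α y, v r < 0 := by
  obtain ⟨α, hα, hα0, hlt⟩ := exists_first_hit (f := fun r => -v r) (l := 0) hxy.le hc.neg
    (by linarith) (by linarith)
  have hα0 : v α = 0 := by linarith
  have hsg : ∀ t ∈ Icc x y, v t = 0 →
      ∀ᶠ r in 𝓝 t, SignType.sign (v r) = SignType.sign (t - r) := fun t ht h0 =>
    eventually_nhdsWithin_sign_eq_of_deriv_neg (by rw [(hd t ht).deriv]; exact hz t ht h0) h0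
  have hαy : α < y := hα.2.lt_of_ne fun h => by rw [h] at hα0; linarith
  refine ⟨α, ⟨hα.1, hαy⟩, hα0, fun r hr => by linarith [hlt r hr], ?_⟩
  intro z hzm
  by_contra hcon
  push Not at hcon
  obtain ⟨e, he, hball⟩ := Metric.eventually_nhds_iff.1 (hsg α ⟨hα.1.le, hα.2⟩ hα0)
  set w := min (α + e / 2) ((α + z) / 2) with hw
  have hw1 : α < w := lt_min (by linarith) (by linarith [hzm.1])
  have hw2 : w < z := (min_le_right _ _).trans_lt (by linarith [hzm.1])
  have hw3 : w ≤ α + e / 2 := min_le_left _ _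
  have hvw : v w < 0 := by
    have := hball (y := w) (by rw [Real.dist_eq, abs_of_pos (by linarith)]; linarith)
    rw [sign_neg (by linarith : α - w < 0)] at this
    exact sign_eq_neg_one_iff.1 this
  obtain ⟨t, ht, ht0, htl⟩ := exists_first_hit (f := v) (l := 0) hw2.le
    (hc.mono fun r hr => ⟨by linarith [hr.1, hα.1], hr.2.trans hzm.2⟩) hvw hcon
  have htI : t ∈ Icc x y := ⟨by linarith [ht.1, hα.1], ht.2.trans hzm.2⟩
  obtain ⟨e', he', hball'⟩ := Metric.eventually_nhds_iff.1 (hsg t htI ht0)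
  set q := max (t - e' / 2) w with hq
  have hq1 : q < t := max_lt (by linarith) ht.1
  have h1 := htl q ⟨le_max_right _ _, hq1⟩
  have h2 := hball' (y := q) (by
    have : t - e' / 2 ≤ q := le_max_left _ _
    rw [Real.dist_eq, abs_of_neg (by linarith)]; linarith)
  rw [sign_pos (by linarith : 0 < t - q)] at h2
  linarith [sign_eq_one_iff.1 h2]

/-- The solution crosses the strip `u ≥ l`, entered at `t₁`, in a single hump and leaves it at some
`t₂`, the slope at the exit being nearly opposite to the slope at the entrance. -/
lemma exists_hump {n : ℕ} {a b : ℝ} (ha : 0 ≤ a) (hb : b ≤ 1) {p : ℝ} (hp : 1 < p)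
    {u v : ℝ → ℝ} (hu : Sol n a b (fun x => x - truncPow p x) u v)
    {t₁ l h r₀ M₀ M k C : ℝ} (hr₀ : 0 < r₀) (ht₁ : r₀ ≤ t₁) (hat : a < t₁) (htb : t₁ < b)
    (hl : 0 < l) (hl1 : l < 1) (hh : 1 < h) (hh2 : h ≤ 2) (hv : 0 < v t₁) (hM₀ : v t₁ ≤ M₀)
    (hF : M₀ ^ 2 / 2 + 3 < h ^ (p + 1) / (p + 1)) (hut : u t₁ = l)
    (hM : M = M₀ + 2) (hk : k = n / r₀) (hC : C = 2 + k * M)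
    (hc1 : 1 < (v t₁ ^ 2 - 2 * k * (h - l) * (3 * M + C)) * (p + 1) / 2)
    (hc2 : ((h - l) + 4 / (p + 1)) * (3 * M + C) <
      (v t₁ ^ 2 - 2 * k * (h - l) * (3 * M + C)) * (b - t₁)) :
    ∃ t₂ ∈ Ioo t₁ b, ∃ α ∈ Ioo t₁ t₂, u t₂ = l ∧
      (∀ r ∈ Icc t₁ t₂, l ≤ u r ∧ u r ≤ h ∧ |v r| ≤ M) ∧ v t₂ < 0 ∧
      |v t₂ ^ 2 - v t₁ ^ 2| ≤ 2 * k * (h - l) * (3 * M + C) ∧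
      (v t₁ ^ 2 - 2 * k * (h - l) * (3 * M + C)) * (t₂ - t₁) ≤
        ((h - l) + 4 / (p + 1)) * (3 * M + C) ∧
      (∀ r ∈ Ico t₁ α, 0 < v r) ∧ ∀ r ∈ Ioc α t₂, v r < 0 := by
  have hp1 : 0 < p + 1 := by linarith
  have hMabs : |v t₁| ≤ M₀ := by rwa [abs_of_pos hv]
  have key := fun T hT hTb hul => hump_bounds ha hb hp hu (T := T) hr₀ ht₁ hat hT hTb hl hl1 hh hh2
    hMabs hF hut hul hM hk hC
  obtain ⟨y, hy, hyl⟩ : ∃ y ∈ Icc t₁ b, u y < l := by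
    by_contra hcon
    push Not at hcon
    linarith [(key b htb.le le_rfl hcon).2.2.2.2]
  have htI : t₁ ∈ Ioo a b := ⟨hat, htb⟩
  have hsg := eventually_nhdsWithin_sign_eq_of_deriv_pos (f := fun r => u r - l) (x₀ := t₁)
    (by rw [((hu.du t₁ htI).sub_const l).deriv]; exact hv) (by simp [hut])
  obtain ⟨e, he, hball⟩ := Metric.eventually_nhds_iff.1 hsg
  have hpos : ∀ r, t₁ < r → r < t₁ + e → l < u r := by
    intro r h1 h2
    have := hball (y := r) (by rw [Real.dist_eq, abs_of_pos (by linarith)]; linarith)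
    rw [sign_pos (by linarith : 0 < r - t₁)] at this
    linarith [sign_eq_one_iff.1 this]
  have hyt : t₁ + e ≤ y := by
    by_contra hcon
    push Not at hcon
    rcases hy.1.lt_or_eq with h1 | h1
    · linarith [hpos y h1 hcon]
    · rw [← h1] at hyl; linarith
  obtain ⟨t₂, ht₂, hut₂, hlt⟩ := exists_first_hit (f := fun r => -u r) (l := -l)
    (x := t₁ + e / 2) (y := y) (by linarith)
    (hu.cu.neg.mono fun r hr => ⟨by linarith [hr.1], hr.2.trans hy.2⟩)
    (by linarith [hpos (t₁ + e / 2) (by linarith) (by linarith)]) (by linarith)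
  have hut₂ : u t₂ = l := by linarith
  have ht₂y : t₂ < y := ht₂.2.lt_of_ne fun h => by rw [h] at hut₂; linarith
  have h12 : t₁ < t₂ := by linarith [ht₂.1]
  have ht₂b : t₂ < b := ht₂y.trans_le hy.2
  have hgt : ∀ r ∈ Ioo t₁ t₂, l < u r := by
    intro r hr
    rcases lt_or_ge r (t₁ + e / 2) with h1 | h1
    · exact hpos r hr.1 (by linarith)
    · linarith [hlt r ⟨h1, hr.2⟩]
  have hge : ∀ r ∈ Icc t₁ t₂, l ≤ u r := by
    intro r hr
    rcases hr.1.lt_or_eq with h1 | h1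
    · rcases hr.2.lt_or_eq with h2 | h2
      · exact (hgt r ⟨h1, h2⟩).le
      · rw [h2, hut₂]
    · rw [← h1, hut]
  have key2 := fun r (hr : r ∈ Icc t₁ t₂) => key r hr.1 (hr.2.trans ht₂b.le)
    fun x hx => hge x ⟨hx.1, hx.2.trans hr.2⟩
  have ht₂I : t₂ ∈ Icc t₁ t₂ := ⟨h12.le, le_rfl⟩
  have hmem : ∀ {r}, r ∈ Icc t₁ t₂ → r ∈ Ioo a b := fun hr =>
    ⟨hat.trans_le hr.1, hr.2.trans_lt ht₂b⟩
  have hFl : 0 ≤ l ^ (p + 1) / (p + 1) := by positivity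
  -- at a critical point the whole energy is potential, hence `u > 1` there
  have hcrit : ∀ r ∈ Icc t₁ t₂, v r = 0 → 1 < u r := by
    intro r hr h0
    have h1 := (key2 r hr).2.2.2.1
    have h2 := hge r hr
    rw [energy, energy, hut, h0] at h1
    have h3 : l ^ 2 ≤ u r ^ 2 := by gcongr
    have h4 : (v t₁ ^ 2 - 2 * k * (h - l) * (3 * M + C)) / 2 ≤ u r ^ (p + 1) / (p + 1) := by
      linarith
    rw [le_div_iff₀ hp1] at h4
    by_contra hcon
    push Not at hcon
    have := rpow_le_one (hl.le.trans h2) hcon hp1.le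
    linarith
  have hv₂ : v t₂ < 0 := by
    rcases lt_trichotomy (v t₂) 0 with h0 | h0 | h0
    · exact h0
    · linarith [hcrit t₂ ht₂I h0]
    · exfalso
      have hsg := eventually_nhdsWithin_sign_eq_of_deriv_pos (f := fun r => u r - l) (x₀ := t₂)
        (by rw [((hu.du t₂ (hmem ht₂I)).sub_const l).deriv]; exact h0) (by simp [hut₂])
      obtain ⟨e, he, hball⟩ := Metric.eventually_nhds_iff.1 hsg
      set q := max (t₂ - e / 2) ((t₁ + t₂) / 2) with hq
      have hq1 : q < t₂ := max_lt (by linarith) (by linarith)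
      have hq2 : t₂ - e / 2 ≤ q := le_max_left _ _
      have hq3 : t₁ < q := lt_of_lt_of_le (by linarith) (le_max_right _ _)
      have h2 := hball (y := q) (by rw [Real.dist_eq, abs_of_neg (by linarith)]; linarith)
      rw [sign_neg (by linarith : q - t₂ < 0)] at h2
      linarith [sign_eq_neg_one_iff.1 h2, hgt q ⟨hq3, hq1⟩]
  obtain ⟨α, hα, -, hα1, hα2⟩ := exists_unique_sign_change h12
    (hu.cv.mono fun r hr => Ioo_subset_Icc_self (hmem hr)) (fun r hr => hu.dv r (hmem hr)) hv hv₂ (by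
      intro r hr h0
      have h1 := hcrit r hr h0
      rw [h0, truncPow_eq (by linarith) ((key2 r hr).1.trans hh2)]
      have := rpow_lt_rpow_of_exponent_lt h1 hp
      rw [rpow_one] at this
      simp; linarith)
  obtain ⟨-, -, h3, h4, h5⟩ := key2 t₂ ht₂I
  refine ⟨t₂, ⟨h12, ht₂b⟩, α, hα, hut₂, fun r hr => ⟨hge r hr, (key2 r hr).1, (key2 r hr).2.1⟩, hv₂,
    ?_, h5, hα1, hα2⟩
  rw [energy, energy, hut, hut₂] at h3 h4
  rw [abs_le]
  constructor <;> linarith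

/-! ### Levels -/

/-- Lower level of the inner layer. -/
noncomputable def lo (p : ℝ) : ℝ := 1 - 1 / √p

/-- Upper level of the inner layer. -/
noncomputable def hi (p : ℝ) : ℝ := 1 + 1 / √p

lemma tendsto_inv_sqrt : Tendsto (fun p : ℝ => 1 / √p) atTop (𝓝 0) := by
  simp only [one_div]
  exact tendsto_sqrt_atTop.inv_tendsto_atTop

lemma tendsto_lo : Tendsto lo atTop (𝓝 1) := by
  have := tendsto_inv_sqrt.const_sub 1
  rwa [sub_zero] at this

lemma tendsto_hi_sub_lo : Tendsto (fun p => hi p - lo p) atTop (𝓝 0) := by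
  have := tendsto_inv_sqrt.const_mul 2
  simp only [mul_zero] at this
  refine this.congr fun p => ?_
  simp only [hi, lo]; ring

lemma eventually_levels : ∀ᶠ p : ℝ in atTop, 1 < p ∧ 0 < lo p ∧ lo p < 1 ∧ 1 < hi p ∧ hi p ≤ 2 := by
  filter_upwards [eventually_gt_atTop 1] with p hp
  have h0 : 1 < √p := by rw [Real.lt_sqrt (by norm_num)]; linarith
  have h1 : 1 / √p < 1 := by rw [div_lt_one (by linarith)]; exact h0
  have h2 : 0 < 1 / √p := by positivity
  refine ⟨hp, ?_, ?_, ?_, ?_⟩ <;> simp only [lo, hi] <;> linarith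

lemma tendsto_lo_pow : Tendsto (fun p => lo p ^ p) atTop (𝓝 0) := by
  have h : Tendsto (fun p : ℝ => exp (-√p)) atTop (𝓝 0) :=
    tendsto_exp_neg_atTop_nhds_zero.comp tendsto_sqrt_atTop
  refine tendsto_of_tendsto_of_tendsto_of_le_of_le' tendsto_const_nhds h ?_ ?_
  · filter_upwards [eventually_levels] with p hp using rpow_nonneg hp.2.1.le _
  · filter_upwards [eventually_levels] with p hp
    have hp0 : 0 < p := by linarith [hp.1]
    have h1 : lo p ≤ exp (-(1 / √p)) := by
      have := add_one_le_exp (-(1 / √p))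
      simp only [lo]; linarith
    calc lo p ^ p ≤ exp (-(1 / √p)) ^ p := rpow_le_rpow hp.2.1.le h1 hp0.le
      _ = exp (-√p) := by
        rw [← exp_mul]
        congr 1
        have : √p ≠ 0 := by positivity
        field_simp
        rw [Real.sq_sqrt hp0.le]

lemma tendsto_hi_pow : Tendsto (fun p => hi p ^ (p + 1) / (p + 1)) atTop atTop := by
  have h : Tendsto (fun p : ℝ => p / 768) atTop atTop := tendsto_id.atTop_div_const (by norm_num)
  refine tendsto_atTop_mono' _ ?_ h
  filter_upwards [eventually_levels] with p hp
  have hp0 : 0 < p := by linarith [hp.1]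
  have hs : 0 < √p := by positivity
  have hs1 : √p ^ 2 = p := Real.sq_sqrt hp0.le
  have hhi : 0 < hi p := by linarith [hp.2.2.2.1]
  have h1 : 1 / (2 * √p) ≤ log (hi p) := by
    have h2 := one_sub_inv_le_log_of_pos hhi
    have h3 : (1 - (hi p)⁻¹) = (1 / √p) / hi p := by
      have : hi p - 1 = 1 / √p := by simp [hi]
      rw [← this]; field_simp
    have h4 : (1 / √p) / 2 ≤ (1 / √p) / hi p := by
      have := hp.2.2.2.2
      gcongr
    have h5 : 1 / (2 * √p) = (1 / √p) / 2 := by field_simp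
    linarith
  have h6 : exp (√p / 2) ≤ hi p ^ (p + 1) := by
    rw [rpow_def_of_pos hhi, exp_le_exp]
    have h7 : √p / 2 = 1 / (2 * √p) * p := by
      field_simp; exact hs1
    rw [h7]
    have h8 : 0 ≤ 1 / (2 * √p) := by positivity
    nlinarith
  have h9 := pow_div_factorial_le_exp (√p / 2) (by positivity) 4
  have h10 : (√p / 2) ^ 4 / (Nat.factorial 4 : ℕ) = p ^ 2 / 384 := by
    have : (√p) ^ 4 = p ^ 2 := by rw [show √p ^ 4 = (√p ^ 2) ^ 2 by ring, hs1]
    rw [div_pow, this]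
    norm_num [Nat.factorial]
    ring
  rw [h10] at h9
  rw [le_div_iff₀ (by linarith)]
  nlinarith [hp.1]

/-! ### Linear data on an interval -/

/-- A fundamental system `φ, ψ` (with derivatives `φ1, ψ1`) of the linear equation on `[a,b]`, `φ`
satisfying the Neumann condition at `a` and `ψ` the one at `b`; `σ` is the reflection point. -/
structure LinData (n : ℕ) (a b c σ : ℝ) (φ φ1 ψ ψ1 : ℝ → ℝ) : Prop where
  ha : 0 ≤ a
  hab : a < b
  hb : b ≤ 1
  hφ : Sol n a b id φ φ1
  φpos : ∀ r ∈ Icc a b, 0 < φ r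
  φ1pos : ∀ r ∈ Ioc a b, 0 < φ1 r
  cψ : ContinuousOn ψ (Ioc a b)
  cψ1 : ContinuousOn ψ1 (Ioc a b)
  dψ : ∀ r ∈ Ioo a b, HasDerivAt ψ (ψ1 r) r
  dψ1 : ∀ r ∈ Ioo a b, HasDerivAt ψ1 (ψ r - n / r * ψ1 r) r
  ψ1b : ψ1 b = 0
  ψpos : ∀ r ∈ Ioc a b, 0 < ψ r
  ψ1neg : ∀ r ∈ Ioo a b, ψ1 r < 0
  cpos : 0 < c
  wr : ∀ r ∈ Ioc a b, r ^ n * (φ1 r * ψ r - φ r * ψ1 r) = c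
  σmem : σ ∈ Ioo a b
  refl : φ1 σ * ψ σ + φ σ * ψ1 σ = 0
  refl_neg : ∀ s ∈ Ioo a σ, φ1 s * ψ s + φ s * ψ1 s < 0
  refl_pos : ∀ s ∈ Ioo σ b, 0 < φ1 s * ψ s + φ s * ψ1 s

section

variable {n : ℕ} {a b c σ : ℝ} {φ φ1 ψ ψ1 : ℝ → ℝ}

lemma LinData.φ_strictMono (L : LinData n a b c σ φ φ1 ψ ψ1) : StrictMonoOn φ (Icc a b) :=
  strictMonoOn_of_hasDerivAt_pos L.hφ.cu L.hφ.du fun r hr => L.φ1pos r ⟨hr.1, hr.2.le⟩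

lemma LinData.φ_bounds (L : LinData n a b c σ φ φ1 ψ ψ1) :
    ∀ r ∈ Icc a b, φ a ≤ φ r ∧ φ r ≤ φ b := fun _ hr =>
  ⟨L.φ_strictMono.monotoneOn ⟨le_rfl, L.hab.le⟩ hr hr.1,
    L.φ_strictMono.monotoneOn hr ⟨L.hab.le, le_rfl⟩ hr.2⟩

/-! ### The outer region to the left of the layer -/

/-- The solution starting at `φ a / φ s` reaches the level `l < 1`, and is close to `φ / φ s` up to
that point. -/
lemma left_region (L : LinData n a b c σ φ φ1 ψ ψ1) {p l s : ℝ} {u v : ℝ → ℝ} (hp : 1 < p)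
    (hl : 0 < l) (hl1 : l < 1) (hs : s ∈ Icc a b)
    (hu : Sol n a b (fun x => x - truncPow p x) u v) (hua : u a = φ a / φ s)
    (h1 : φ a / φ s < l) (h2 : l ≤ (1 / φ s - φ b / φ a ^ 2 * l ^ p) * φ b)
    (h3 : φ b / φ a ^ 2 * l ^ p < 1 / φ s) :
    ∃ t ∈ Ioc a b, u t = l ∧ (∀ r ∈ Icc a t, 0 < u r ∧ u r ≤ l) ∧ (∀ r ∈ Ioc a t, 0 < v r) ∧
      (∀ r ∈ Icc a t, |u r - φ r / φ s| ≤ φ b ^ 2 / φ a ^ 2 * l ^ p) ∧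
      |v t * φ t - u t * φ1 t| ≤ φ b * l ^ p := by
  have haI : a ∈ Icc a b := ⟨le_rfl, L.hab.le⟩
  have hbI : b ∈ Icc a b := ⟨L.hab.le, le_rfl⟩
  have hφa := L.φpos a haI
  have hφb := L.φpos b hbI
  have hφs := L.φpos s hs
  have hlin := fun τ hτ hf => linear_regime L.ha L.hb L.hφ hφa L.φ_bounds (ε := l ^ p) hu (τ := τ) hτ hf
  have hq : u a / φ a = 1 / φ s := by rw [hua]; field_simp
  have hle : ∀ {x}, x ≤ l → truncPow p x ≤ l ^ p := fun h =>
    truncPow_le (by linarith) hl.le h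
  obtain ⟨y, hy, hyl⟩ : ∃ y ∈ Icc a b, l ≤ u y := by
    by_contra hcon
    push Not at hcon
    have h4 := (hlin b hbI (fun r hr => hle (hcon r hr).le) b hbI).2.1
    rw [hq] at h4
    linarith [hcon b hbI]
  obtain ⟨t, ht, hut, hlt⟩ := exists_first_hit hy.1
    (hu.cu.mono (Icc_subset_Icc_right hy.2)) (by rw [hua]; exact h1) hyl
  have htb : t ≤ b := ht.2.trans hy.2
  have htI : t ∈ Icc a b := ⟨ht.1.le, htb⟩
  have hle' : ∀ r ∈ Icc a t, u r ≤ l := fun r hr => by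
    rcases hr.2.lt_or_eq with h | h
    · exact (hlt r ⟨hr.1, h⟩).le
    · rw [h, hut]
  have hkey := hlin t htI (fun r hr => hle (hle' r hr))
  rw [hq] at hkey
  have hpos : ∀ r ∈ Icc a t, 0 < u r := fun r hr =>
    (mul_pos (sub_pos.2 h3) (L.φpos r ⟨hr.1, hr.2.trans htb⟩)).trans_le (hkey r hr).2.1
  have hlp : 0 ≤ l ^ p := by positivity
  refine ⟨t, ⟨ht.1, htb⟩, hut, fun r hr => ⟨hpos r hr, hle' r hr⟩, ?_, ?_, ?_⟩
  · have hmono : StrictMonoOn (fun r => r ^ n * v r) (Icc a t) :=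
      strictMonoOn_of_hasDerivAt_pos
        (((continuousOn_id.pow n).mul hu.cv).mono (Icc_subset_Icc_right htb))
        (fun r hr => hasDerivAt_pow_mul (L.ha.trans_lt hr.1)
          (hu.dv r ⟨hr.1, hr.2.trans_le htb⟩)) (by
        intro r hr
        have h5 := hpos r (Ioo_subset_Icc_self hr)
        have h6 := hle' r (Ioo_subset_Icc_self hr)
        have h0 : 0 < r := L.ha.trans_lt hr.1
        rw [truncPow_eq h5.le (by linarith)]
        have h7 := rpow_lt_rpow_of_exponent_gt h5 (by linarith) hp
        rw [rpow_one] at h7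
        exact mul_pos (by positivity) (by linarith))
    intro r hr
    have h5 := hmono ⟨le_rfl, ht.1.le⟩ ⟨hr.1.le, hr.2⟩ hr.1
    simp only [hu.va, mul_zero] at h5
    exact pos_of_mul_pos_right h5 (pow_pos (L.ha.trans_lt hr.1) n).le
  · intro r hr
    obtain ⟨h5, h6, -, -⟩ := hkey r hr
    have h7 := L.φ_bounds r ⟨hr.1, hr.2.trans htb⟩
    have h8 : φ b / φ a ^ 2 * l ^ p * φ r ≤ φ b ^ 2 / φ a ^ 2 * l ^ p := by
      have : φ b ^ 2 / φ a ^ 2 * l ^ p = φ b / φ a ^ 2 * l ^ p * φ b := by ring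
      rw [this]
      gcongr
      exact h7.2
    have h9 : 0 ≤ φ b ^ 2 / φ a ^ 2 * l ^ p := by positivity
    rw [abs_le]
    have h10 : 1 / φ s * φ r = φ r / φ s := by ring
    rw [h10] at h5
    rw [sub_mul, h10] at h6
    constructor <;> linarith
  · obtain ⟨-, -, h7, h8⟩ := hkey t ⟨ht.1.le, le_rfl⟩
    rw [abs_le]
    have : 0 ≤ φ b * l ^ p := by positivity
    constructor <;> linarith

/-- The error scale of the outer approximation. -/
lemma tendsto_lo_pow_mul (x : ℝ) : Tendsto (fun p => x * lo p ^ p) atTop (𝓝 0) := by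
  simpa using tendsto_lo_pow.const_mul x

/-- Asymptotics of the entrance into the layer, for shooting parameters `s p → s₀`. -/
lemma left_asymptotics (L : LinData n a b c σ φ φ1 ψ ψ1) {u v : ℝ → ℝ → ℝ} {s : ℝ → ℝ} {s₀ : ℝ}
    (hs₀ : s₀ ∈ Ioo a b) (hs : Tendsto s atTop (𝓝 s₀))
    (hu : ∀ᶠ p in atTop, Sol n a b (fun x => x - truncPow p x) (u p) (v p) ∧
      u p a = φ a / φ (s p)) :
    ∃ t : ℝ → ℝ, Tendsto t atTop (𝓝 s₀) ∧
      Tendsto (fun p => v p (t p)) atTop (𝓝 (φ1 s₀ / φ s₀)) ∧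
      ∀ᶠ p in atTop, t p ∈ Ioo a b ∧ u p (t p) = lo p ∧
        (∀ r ∈ Icc a (t p), 0 < u p r ∧ u p r ≤ lo p) ∧ (∀ r ∈ Ioc a (t p), 0 < v p r) ∧
        ∀ r ∈ Icc a (t p), |u p r - φ r / φ (s p)| ≤ φ b ^ 2 / φ a ^ 2 * lo p ^ p := by
  have haI : a ∈ Icc a b := ⟨le_rfl, L.hab.le⟩
  have hbI : b ∈ Icc a b := ⟨L.hab.le, le_rfl⟩
  have hsI := Ioo_subset_Icc_self hs₀
  have hφa := L.φpos a haI
  have hφb := L.φpos b hbI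
  have hφs := L.φpos s₀ hsI
  have hcφ : ContinuousAt φ s₀ := L.hφ.cu.continuousAt (Icc_mem_nhds hs₀.1 hs₀.2)
  have hcφ1 : ContinuousAt φ1 s₀ := L.hφ.cv.continuousAt (Icc_mem_nhds hs₀.1 hs₀.2)
  have hφsp : Tendsto (fun p => φ (s p)) atTop (𝓝 (φ s₀)) := hcφ.tendsto.comp hs
  have hinv : Tendsto (fun p => 1 / φ (s p)) atTop (𝓝 (1 / φ s₀)) :=
    tendsto_const_nhds.div hφsp hφs.ne'
  have e1 : ∀ᶠ p in atTop, φ a / φ (s p) < lo p := by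
    have h : Tendsto (fun p => φ a / φ (s p)) atTop (𝓝 (φ a / φ s₀)) :=
      tendsto_const_nhds.div hφsp hφs.ne'
    refine h.eventually_lt tendsto_lo ?_
    rw [div_lt_one hφs]
    exact L.φ_strictMono haI hsI hs₀.1
  have e2 : ∀ᶠ p in atTop, lo p < (1 / φ (s p) - φ b / φ a ^ 2 * lo p ^ p) * φ b := by
    have h := (hinv.sub (tendsto_lo_pow_mul (φ b / φ a ^ 2))).mul_const (φ b)
    refine tendsto_lo.eventually_lt h ?_
    rw [sub_zero, one_div, inv_mul_eq_div, one_lt_div hφs]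
    exact L.φ_strictMono hsI hbI hs₀.2
  have e3 : ∀ᶠ p in atTop, φ b / φ a ^ 2 * lo p ^ p < 1 / φ (s p) :=
    (tendsto_lo_pow_mul _).eventually_lt hinv (by positivity)
  have e4 : ∀ᶠ p in atTop, s p ∈ Icc a b := hs.eventually (Icc_mem_nhds hs₀.1 hs₀.2)
  have hex : ∀ᶠ p in atTop, ∃ t ∈ Ioc a b, u p t = lo p ∧
      (∀ r ∈ Icc a t, 0 < u p r ∧ u p r ≤ lo p) ∧ (∀ r ∈ Ioc a t, 0 < v p r) ∧
      (∀ r ∈ Icc a t, |u p r - φ r / φ (s p)| ≤ φ b ^ 2 / φ a ^ 2 * lo p ^ p) ∧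
      |v p t * φ t - u p t * φ1 t| ≤ φ b * lo p ^ p := by
    filter_upwards [e1, e2, e3, e4, hu, eventually_levels] with p h1 h2 h3 h4 h5 h6
    exact left_region L h6.1 h6.2.1 h6.2.2.1 h4 h5.1 h5.2 h1 h2.le h3
  obtain ⟨t, ht⟩ := hex.choice
  have hratio : Tendsto (fun p => φ (t p) / φ (s p)) atTop (𝓝 1) := by
    have h1 : Tendsto (fun p => u p (t p) - φ (t p) / φ (s p)) atTop (𝓝 0) := by
      refine squeeze_zero_norm' ?_ (tendsto_lo_pow_mul (φ b ^ 2 / φ a ^ 2))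
      filter_upwards [ht] with p hp using hp.2.2.2.2.1 _ ⟨hp.1.1.le, le_rfl⟩
    have h2 : Tendsto (fun p => u p (t p)) atTop (𝓝 1) := by
      refine tendsto_lo.congr' ?_
      filter_upwards [ht] with p hp using hp.2.1.symm
    simpa using h2.sub h1
  have hφt : Tendsto (fun p => φ (t p)) atTop (𝓝 (φ s₀)) := by
    have h := hratio.mul hφsp
    rw [one_mul] at h
    refine h.congr' ?_
    filter_upwards [e4] with p hp
    exact div_mul_cancel₀ _ (L.φpos _ hp).ne'
  have htend : Tendsto t atTop (𝓝 s₀) := by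
    rw [tendsto_order]
    constructor
    · intro x hx
      rcases le_or_gt x a with h | h
      · filter_upwards [ht] with p hp using h.trans_lt hp.1.1
      · have hxI : x ∈ Icc a b := ⟨h.le, hx.le.trans hs₀.2.le⟩
        filter_upwards [ht, hφt.eventually_const_lt (L.φ_strictMono hxI hsI hx)] with p hp h1
        exact (L.φ_strictMono.lt_iff_lt hxI (Ioc_subset_Icc_self hp.1)).1 h1
    · intro x hx
      rcases lt_or_ge b x with h | h
      · filter_upwards [ht] with p hp using hp.1.2.trans_lt h
      · have hxI : x ∈ Icc a b := ⟨hs₀.1.le.trans hx.le, h⟩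
        filter_upwards [ht, hφt.eventually_lt_const (L.φ_strictMono hsI hxI hx)] with p hp h1
        exact (L.φ_strictMono.lt_iff_lt (Ioc_subset_Icc_self hp.1) hxI).1 h1
  refine ⟨t, htend, ?_, ?_⟩
  · have h1 : Tendsto (fun p => v p (t p) * φ (t p) - u p (t p) * φ1 (t p)) atTop (𝓝 0) := by
      refine squeeze_zero_norm' ?_ (tendsto_lo_pow_mul (φ b))
      filter_upwards [ht] with p hp using hp.2.2.2.2.2
    have h2 := (h1.add (tendsto_lo.mul (hcφ1.tendsto.comp htend))).div hφt hφs.ne'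
    rw [zero_add, one_mul] at h2
    refine h2.congr' ?_
    filter_upwards [ht] with p hp
    have := L.φpos (t p) (Ioc_subset_Icc_self hp.1)
    simp only [Function.comp, Pi.div_apply]
    rw [hp.2.1]
    field_simp
    ring
  · filter_upwards [ht, htend.eventually_lt_const hs₀.2] with p hp h1
    exact ⟨⟨hp.1.1, h1⟩, hp.2.1, hp.2.2.1, hp.2.2.2.1, hp.2.2.2.2.1⟩

end

section

variable {n : ℕ} {a b c σ : ℝ} {φ φ1 ψ ψ1 : ℝ → ℝ}

/-! ### Asymptotics of the layer -/

/-- The layer, entered at `t₁ p` and left at `t₂ p`, shrinks to the point `s₀`, and the slope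
changes sign across it. -/
lemma layer_asymptotics (L : LinData n a b c σ φ φ1 ψ ψ1) {u v : ℝ → ℝ → ℝ} {s : ℝ → ℝ} {s₀ : ℝ}
    (hs₀ : s₀ ∈ Ioo a b) (hs : Tendsto s atTop (𝓝 s₀))
    (hu : ∀ᶠ p in atTop, Sol n a b (fun x => x - truncPow p x) (u p) (v p) ∧
      u p a = φ a / φ (s p)) :
    ∃ t₁ t₂ α : ℝ → ℝ, Tendsto t₁ atTop (𝓝 s₀) ∧ Tendsto t₂ atTop (𝓝 s₀) ∧
      Tendsto (fun p => v p (t₂ p)) atTop (𝓝 (-(φ1 s₀ / φ s₀))) ∧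
      ∀ᶠ p in atTop, a < t₁ p ∧ t₁ p < α p ∧ α p < t₂ p ∧ t₂ p < b ∧ u p (t₂ p) = lo p ∧
        (∀ r ∈ Icc a (t₁ p), 0 < u p r ∧ u p r ≤ lo p) ∧
        (∀ r ∈ Icc (t₁ p) (t₂ p), lo p ≤ u p r ∧ u p r ≤ hi p) ∧
        (∀ r ∈ Ioo a (α p), 0 < v p r) ∧ (∀ r ∈ Ioc (α p) (t₂ p), v p r < 0) ∧
        ∀ r ∈ Icc a (t₁ p), |u p r - φ r / φ (s p)| ≤ φ b ^ 2 / φ a ^ 2 * lo p ^ p := by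
  obtain ⟨t₁, ht₁, hv₁, hev⟩ := left_asymptotics L hs₀ hs hu
  set m := φ1 s₀ / φ s₀ with hm
  have hm0 : 0 < m := div_pos (L.φ1pos s₀ (Ioo_subset_Ioc_self hs₀))
    (L.φpos s₀ (Ioo_subset_Icc_self hs₀))
  obtain ⟨r₀, hr₀⟩ : ∃ x, x = (a + s₀) / 2 := ⟨_, rfl⟩
  have hr₀pos : 0 < r₀ := by linarith [L.ha, hs₀.1]
  obtain ⟨M, hM⟩ : ∃ M, M = (m + 1) + 2 := ⟨_, rfl⟩
  obtain ⟨k, hk⟩ : ∃ k : ℝ, k = n / r₀ := ⟨_, rfl⟩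
  obtain ⟨C, hC⟩ : ∃ C, C = 2 + k * M := ⟨_, rfl⟩
  have hH : Tendsto (fun p => 2 * k * (hi p - lo p) * (3 * M + C)) atTop (𝓝 0) := by
    simpa using (tendsto_hi_sub_lo.const_mul (2 * k)).mul_const (3 * M + C)
  have hcp : Tendsto (fun p => v p (t₁ p) ^ 2 - 2 * k * (hi p - lo p) * (3 * M + C)) atTop
      (𝓝 (m ^ 2)) := by simpa using (hv₁.pow 2).sub hH
  have hpinf : Tendsto (fun p : ℝ => p + 1) atTop atTop :=
    tendsto_atTop_add_const_right _ _ tendsto_id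
  have hH' : Tendsto (fun p => ((hi p - lo p) + 4 / (p + 1)) * (3 * M + C)) atTop (𝓝 0) := by
    have h1 : Tendsto (fun p : ℝ => 4 / (p + 1)) atTop (𝓝 0) := hpinf.const_div_atTop 4
    simpa using (tendsto_hi_sub_lo.add h1).mul_const (3 * M + C)
  have hc1 : Tendsto (fun p => (v p (t₁ p) ^ 2 - 2 * k * (hi p - lo p) * (3 * M + C)) *
      (p + 1) / 2) atTop atTop :=
    (hcp.pos_mul_atTop (by positivity) hpinf).atTop_div_const (by norm_num)
  have hc2 : Tendsto (fun p => (v p (t₁ p) ^ 2 - 2 * k * (hi p - lo p) * (3 * M + C)) *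
      (b - t₁ p)) atTop (𝓝 (m ^ 2 * (b - s₀))) := hcp.mul (ht₁.const_sub b)
  have hbs : 0 < m ^ 2 * (b - s₀) := mul_pos (by positivity) (by linarith [hs₀.2])
  have hex : ∀ᶠ p in atTop, ∃ y : ℝ × ℝ, y.1 ∈ Ioo (t₁ p) b ∧ y.2 ∈ Ioo (t₁ p) y.1 ∧
      u p y.1 = lo p ∧
      (∀ r ∈ Icc (t₁ p) y.1, lo p ≤ u p r ∧ u p r ≤ hi p ∧ |v p r| ≤ M) ∧ v p y.1 < 0 ∧
      |v p y.1 ^ 2 - v p (t₁ p) ^ 2| ≤ 2 * k * (hi p - lo p) * (3 * M + C) ∧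
      (v p (t₁ p) ^ 2 - 2 * k * (hi p - lo p) * (3 * M + C)) * (y.1 - t₁ p) ≤
        ((hi p - lo p) + 4 / (p + 1)) * (3 * M + C) ∧
      (∀ r ∈ Ico (t₁ p) y.2, 0 < v p r) ∧ ∀ r ∈ Ioc y.2 y.1, v p r < 0 := by
    filter_upwards [hu, hev, eventually_levels, ht₁.eventually_const_lt (by linarith [hs₀.1] :
      r₀ < s₀), hv₁.eventually_const_lt hm0, hv₁.eventually_lt_const (lt_add_one m),
      tendsto_hi_pow.eventually_gt_atTop ((m + 1) ^ 2 / 2 + 3), hc1.eventually_gt_atTop 1,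
      hH'.eventually_lt hc2 hbs] with p h1 h2 h3 h4 h5 h6 h7 h8 h9
    obtain ⟨t₂, ht₂, α, hα, h⟩ := exists_hump L.ha L.hb h3.1 h1.1 hr₀pos h4.le h2.1.1 h2.1.2 h3.2.1
      h3.2.2.1 h3.2.2.2.1 h3.2.2.2.2 h5 h6.le h7 h2.2.1 hM hk hC h8 h9
    exact ⟨(t₂, α), ht₂, hα, h⟩
  obtain ⟨y, hy⟩ := hex.choice
  have hdiff : Tendsto (fun p => (y p).1 - t₁ p) atTop (𝓝 0) := by
    have h1 : Tendsto (fun p => ((hi p - lo p) + 4 / (p + 1)) * (3 * M + C) / (m ^ 2 / 2)) atTop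
        (𝓝 0) := by simpa using hH'.div_const (m ^ 2 / 2)
    refine tendsto_of_tendsto_of_tendsto_of_le_of_le' tendsto_const_nhds h1 ?_ ?_
    · filter_upwards [hy] with p hp
      linarith [hp.1.1]
    · filter_upwards [hy, hcp.eventually_const_lt (by nlinarith : m ^ 2 / 2 < m ^ 2)] with p hp h2
      rw [le_div_iff₀ (by positivity)]
      have h3 := hp.2.2.2.2.2.2.1
      nlinarith [hp.1.1]
  have ht₂ : Tendsto (fun p => (y p).1) atTop (𝓝 s₀) := by simpa using hdiff.add ht₁
  refine ⟨t₁, fun p => (y p).1, fun p => (y p).2, ht₁, ht₂, ?_, ?_⟩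
  · have h1 : Tendsto (fun p => v p (y p).1 ^ 2 - v p (t₁ p) ^ 2) atTop (𝓝 0) :=
      squeeze_zero_norm' (by filter_upwards [hy] with p hp using hp.2.2.2.2.2.1) hH
    have h2 : Tendsto (fun p => v p (y p).1 ^ 2) atTop (𝓝 (m ^ 2)) := by
      simpa using h1.add (hv₁.pow 2)
    have h3 := h2.sqrt.neg
    rw [Real.sqrt_sq hm0.le] at h3
    refine h3.congr' ?_
    filter_upwards [hy] with p hp
    rw [Real.sqrt_sq_eq_abs, abs_of_neg hp.2.2.2.2.1, neg_neg]
  · filter_upwards [hy, hev] with p hp h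
    obtain ⟨g1, g2, g3, g4, g5, -, -, g6, g7⟩ := hp
    refine ⟨h.1.1, g2.1, g2.2, g1.2, g3, h.2.2.1, fun r hr => ⟨(g4 r hr).1, (g4 r hr).2.1⟩, ?_, g7,
      h.2.2.2.2⟩
    intro r hr
    rcases le_or_gt r (t₁ p) with h1 | h1
    · exact h.2.2.2.1 r ⟨hr.1, h1⟩
    · exact g6 r ⟨h1.le, hr.2⟩

end

section

variable {n : ℕ} {a b c σ : ℝ} {φ φ1 ψ ψ1 : ℝ → ℝ}

/-! ### The outer region to the right of the layer -/

/-- The weighted Wronskian `r^n (v χ - u χ')`. -/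
noncomputable def wron (n : ℕ) (χ χ1 u v : ℝ → ℝ) (r : ℝ) : ℝ := r ^ n * (v r * χ r - u r * χ1 r)

/-- The Wronskian with a nonnegative linear solution drifts by at most `K ε` while the nonlinear
term is at most `ε`. -/
lemma wron_drift {χ χ1 u v : ℝ → ℝ} {p x y K ε : ℝ} (hx : 0 < x) (hy : y ≤ 1)
    (hxy : x ≤ y) (ha : a < x) (hyb : y ≤ b)
    (hu : Sol n a b (fun x => x - truncPow p x) u v)
    (cχ : ContinuousOn χ (Icc x y)) (cχ1 : ContinuousOn χ1 (Icc x y))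
    (dχ : ∀ r ∈ Ioo x y, HasDerivAt χ (χ1 r) r)
    (dχ1 : ∀ r ∈ Ioo x y, HasDerivAt χ1 (χ r - n / r * χ1 r) r)
    (hχ : ∀ r ∈ Icc x y, 0 ≤ χ r ∧ χ r ≤ K) (hε : ∀ r ∈ Icc x y, truncPow p (u r) ≤ ε) :
    |wron n χ χ1 u v y - wron n χ χ1 u v x| ≤ K * ε := by
  have hsub : Icc x y ⊆ Icc a b := fun r hr => ⟨ha.le.trans hr.1, hr.2.trans hyb⟩
  have hc : ContinuousOn (wron n χ χ1 u v) (Icc x y) :=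
    (continuousOn_id.pow n).mul (((hu.cv.mono hsub).mul cχ).sub ((hu.cu.mono hsub).mul cχ1))
  have hd : ∀ r ∈ Ioo x y, HasDerivAt (wron n χ χ1 u v)
      (r ^ n * (u r - truncPow p (u r) - u r) * χ r) r := fun r hr =>
    hasDerivAt_wronskian (hx.trans hr.1) (hu.du r ⟨ha.trans hr.1, hr.2.trans_le hyb⟩)
      (hu.dv r ⟨ha.trans hr.1, hr.2.trans_le hyb⟩) (dχ r hr) (dχ1 r hr)
  have hxI : x ∈ Icc x y := ⟨le_rfl, hxy⟩
  have hK : 0 ≤ K := (hχ x hxI).1.trans (hχ x hxI).2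
  have hε0 : 0 ≤ ε := (truncPow_nonneg _ _).trans (hε x hxI)
  have hb : ∀ r ∈ Ioo x y, 0 ≤ r ^ n * truncPow p (u r) * χ r ∧
      r ^ n * truncPow p (u r) * χ r ≤ K * ε := by
    intro r hr
    have hr' := Ioo_subset_Icc_self hr
    have h0 : 0 ≤ r := (hx.trans hr.1).le
    have h1 : r ^ n ≤ 1 := pow_le_one₀ h0 (hr.2.le.trans hy)
    have h2 := truncPow_nonneg p (u r)
    have h3 := hχ r hr'
    refine ⟨mul_nonneg (by positivity) h3.1, ?_⟩
    calc r ^ n * truncPow p (u r) * χ r ≤ 1 * ε * K :=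
          mul_le_mul (mul_le_mul h1 (hε r hr') h2 (by norm_num)) h3.2 h3.1 (by positivity)
      _ = K * ε := by ring
  have h1 := le_of_hasDerivAt_nonneg (f := fun r => -wron n χ χ1 u v r) hxy hc.neg
    (fun r hr => (hd r hr).neg) (fun r hr => by have := (hb r hr).1; linarith)
  have h2 := le_of_hasDerivAt_nonneg (f := fun r => wron n χ χ1 u v r + K * ε * r)
    (f' := fun r => r ^ n * (u r - truncPow p (u r) - u r) * χ r + K * ε) hxy
    (hc.add (continuousOn_const.mul continuousOn_id))
    (fun r hr => (hd r hr).add (((hasDerivAt_id r).const_mul _).congr_deriv (mul_one _)))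
    (fun r hr => by have := (hb r hr).2; linarith)
  have h3 : K * ε * (y - x) ≤ K * ε * 1 := by
    gcongr
    linarith
  have h4 : 0 ≤ K * ε := by positivity
  rw [abs_le]
  constructor <;> linarith

/-- A solution is recovered from its two Wronskians. -/
lemma wron_recover (L : LinData n a b c σ φ φ1 ψ ψ1) (u v : ℝ → ℝ) {r : ℝ} (hr : r ∈ Ioc a b) :
    wron n ψ ψ1 u v r * φ r - wron n φ φ1 u v r * ψ r = c * u r ∧
      wron n ψ ψ1 u v r * φ1 r - wron n φ φ1 u v r * ψ1 r = c * v r := by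
  rw [← L.wr r hr]
  constructor <;> simp only [wron] <;> ring

lemma LinData.ψ_strictAnti (L : LinData n a b c σ φ φ1 ψ ψ1) {x : ℝ} (hx : a < x) :
    StrictAntiOn ψ (Icc x b) :=
  strictAntiOn_of_hasDerivAt_neg (L.cψ.mono fun _ hr => ⟨hx.trans_le hr.1, hr.2⟩)
    (fun r hr => L.dψ r ⟨hx.trans hr.1, hr.2⟩) fun r hr => L.ψ1neg r ⟨hx.trans hr.1, hr.2⟩

/-- Near the reflection point, the limit profile to the right of the layer is decreasing close to
the layer, positive, and stays away from `1` further on; this persists under small perturbations of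
the coefficients `A ≈ 0`, `B ≈ -2 σ^n φ'(σ)`. -/
lemma LinData.robust (L : LinData n a b c σ φ φ1 ψ ψ1) :
    ∃ θ > 0, ∃ κ > 0, ∃ K > 0, a < σ - θ ∧ σ + θ < b ∧
      (∀ r ∈ Icc (σ - θ) b, φ r ≤ K ∧ ψ r ≤ K) ∧
      ∀ A B, |A| ≤ κ → |B + 2 * σ ^ n * φ1 σ| ≤ κ →
        (∀ r ∈ Icc (σ - θ) (σ + θ), A * φ1 r - B * ψ1 r < 0) ∧
        (∀ r ∈ Icc (σ - θ) b, 0 < A * φ r - B * ψ r) ∧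
        ∀ r ∈ Icc (σ + θ) b, A * φ r - B * ψ r < (1 - κ) * c := by
  have hσ1 := L.σmem.1
  have hσ2 := L.σmem.2
  obtain ⟨θ, hθ, hθ1, hθ2⟩ : ∃ θ > 0, a < σ - θ ∧ σ + θ < b := by
    refine ⟨min (σ - a) (b - σ) / 2, half_pos (lt_min (by linarith) (by linarith)), ?_, ?_⟩
    · linarith [min_le_left (σ - a) (b - σ)]
    · linarith [min_le_right (σ - a) (b - σ)]
  have hsub : Icc (σ - θ) b ⊆ Ioc a b := fun r hr => ⟨hθ1.trans_le hr.1, hr.2⟩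
  have hsub' : Icc (σ - θ) b ⊆ Icc a b := hsub.trans Ioc_subset_Icc_self
  have hbI : b ∈ Ioc a b := ⟨L.hab, le_rfl⟩
  obtain ⟨K, hK, hKb⟩ : ∃ K > 0, ∀ r ∈ Icc (σ - θ) b,
      |φ r| ≤ K ∧ |φ1 r| ≤ K ∧ |ψ r| ≤ K ∧ |ψ1 r| ≤ K := by
    obtain ⟨K1, h1⟩ := isCompact_Icc.exists_bound_of_continuousOn (L.hφ.cu.mono hsub')
    obtain ⟨K2, h2⟩ := isCompact_Icc.exists_bound_of_continuousOn (L.hφ.cv.mono hsub')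
    obtain ⟨K3, h3⟩ := isCompact_Icc.exists_bound_of_continuousOn (L.cψ.mono hsub)
    obtain ⟨K4, h4⟩ := isCompact_Icc.exists_bound_of_continuousOn (L.cψ1.mono hsub)
    refine ⟨|K1| + |K2| + |K3| + |K4| + 1, by positivity, fun r hr => ?_⟩
    have g1 := h1 r hr
    have g2 := h2 r hr
    have g3 := h3 r hr
    have g4 := h4 r hr
    simp only [Real.norm_eq_abs] at g1 g2 g3 g4
    have := le_abs_self K1
    have := le_abs_self K2
    have := le_abs_self K3
    have := le_abs_self K4
    have := abs_nonneg K1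
    have := abs_nonneg K2
    have := abs_nonneg K3
    have := abs_nonneg K4
    refine ⟨?_, ?_, ?_, ?_⟩ <;> linarith
  obtain ⟨x0, hx0, hmin⟩ := isCompact_Icc.exists_isMinOn (nonempty_Icc.2 (by linarith : σ - θ ≤ σ + θ))
    ((L.cψ1.neg).mono fun r hr => ⟨hθ1.trans_le hr.1, hr.2.trans hθ2.le⟩)
  set μ := -ψ1 x0 with hμ
  have hμ0 : 0 < μ := by linarith [L.ψ1neg x0 ⟨hθ1.trans_le hx0.1, hx0.2.trans_lt hθ2⟩]
  have hμle : ∀ r ∈ Icc (σ - θ) (σ + θ), ψ1 r ≤ -μ := fun r hr => by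
    have := hmin hr
    simp only [mem_ofPred_eq, Pi.neg_apply] at this
    linarith
  set β := 2 * σ ^ n * φ1 σ with hβ
  have hσI : σ ∈ Ioc a b := ⟨hσ1, hσ2.le⟩
  have hσ0 : 0 < σ := L.ha.trans_lt hσ1
  have hβ0 : 0 < β := mul_pos (by positivity) (L.φ1pos σ hσI)
  have hanti := L.ψ_strictAnti hθ1
  have hβc : β * ψ σ = c := by
    have h1 := L.wr σ hσI
    have h2 := L.refl
    have h3 : σ ^ n * (φ1 σ * ψ σ + φ σ * ψ1 σ) = 0 := by rw [h2, mul_zero]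
    rw [hβ]; linarith
  have hgap : 0 < c - β * ψ (σ + θ) := by
    rw [← hβc]
    have := hanti (a := σ) (b := σ + θ) ⟨by linarith, hσ2.le⟩ ⟨by linarith, hθ2.le⟩ (by linarith)
    nlinarith
  have hψb := L.ψpos b hbI
  have hc := L.cpos
  set μ' := min (β * μ) (min (β * ψ b) (c - β * ψ (σ + θ))) with hμ'
  have hμ'0 : 0 < μ' := lt_min (by positivity) (lt_min (by positivity) hgap)
  obtain ⟨κ, hκ0, hκ⟩ : ∃ κ > 0, κ * (2 * K + c) < μ' := by
    refine ⟨μ' / (2 * (2 * K + c)), by positivity, ?_⟩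
    have : μ' / (2 * (2 * K + c)) * (2 * K + c) = μ' / 2 := by field_simp
    rw [this]; linarith
  have hm1 : μ' ≤ β * μ := min_le_left _ _
  have hm2 : μ' ≤ β * ψ b := (min_le_right _ _).trans (min_le_left _ _)
  have hm3 : μ' ≤ c - β * ψ (σ + θ) := (min_le_right _ _).trans (min_le_right _ _)
  refine ⟨θ, hθ, κ, hκ0, K, hK, hθ1, hθ2, fun r hr =>
    ⟨(le_abs_self _).trans (hKb r hr).1, (le_abs_self _).trans (hKb r hr).2.2.1⟩, ?_⟩
  intro A B hA hB
  have hprod : ∀ {x y : ℝ}, |x| ≤ κ → |y| ≤ K → |x * y| ≤ κ * K := fun hx hy => by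
    rw [abs_mul]; exact mul_le_mul hx hy (abs_nonneg _) hκ0.le
  have hcκ : 0 < κ * c := by positivity
  refine ⟨fun r hr => ?_, fun r hr => ?_, fun r hr => ?_⟩
  · have hr' : r ∈ Icc (σ - θ) b := ⟨hr.1, hr.2.trans hθ2.le⟩
    have h1 := abs_le.1 (hprod hA (hKb r hr').2.1)
    have h2 := abs_le.1 (hprod hB (hKb r hr').2.2.2)
    have h3 := mul_le_mul_of_nonneg_left (hμle r hr) hβ0.le
    nlinarith
  · have h1 := abs_le.1 (hprod hA (hKb r hr).1)
    have h2 := abs_le.1 (hprod hB (hKb r hr).2.2.1)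
    have h4 : ψ b ≤ ψ r := hanti.antitoneOn hr ⟨by linarith, le_rfl⟩ hr.2
    have h3 := mul_le_mul_of_nonneg_left h4 hβ0.le
    nlinarith
  · have hr' : r ∈ Icc (σ - θ) b := ⟨by linarith [hr.1], hr.2⟩
    have h1 := abs_le.1 (hprod hA (hKb r hr').1)
    have h2 := abs_le.1 (hprod hB (hKb r hr').2.2.1)
    have h4 : ψ r ≤ ψ (σ + θ) := hanti.antitoneOn ⟨by linarith, hθ2.le⟩ hr' hr.1
    have h3 := mul_le_mul_of_nonneg_left h4 hβ0.le
    nlinarith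

/-- After leaving the layer at `t₂`, the solution stays below the level `l` up to `b`, hence stays
close to the linear solution with the same Wronskians at `t₂`. -/
lemma right_region (L : LinData n a b c σ φ φ1 ψ ψ1) {θ κ K : ℝ}
    (hθ1 : a < σ - θ) (hK : 0 < K) (hKb : ∀ r ∈ Icc (σ - θ) b, φ r ≤ K ∧ ψ r ≤ K)
    (hrob : ∀ A B, |A| ≤ κ → |B + 2 * σ ^ n * φ1 σ| ≤ κ →
        (∀ r ∈ Icc (σ - θ) (σ + θ), A * φ1 r - B * ψ1 r < 0) ∧
        (∀ r ∈ Icc (σ - θ) b, 0 < A * φ r - B * ψ r) ∧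
        ∀ r ∈ Icc (σ + θ) b, A * φ r - B * ψ r < (1 - κ) * c)
    {p l t₂ : ℝ} (hp : 1 < p) (hl : 0 < l) (hlκ : 1 - κ < l) {u v : ℝ → ℝ}
    (hu : Sol n a b (fun x => x - truncPow p x) u v) (ht₂ : t₂ ∈ Icc (σ - θ) (σ + θ))
    (ht₂b : t₂ < b) (hut : u t₂ = l) (hvt : v t₂ < 0)
    (hA : |wron n ψ ψ1 u v t₂| ≤ κ / 2)
    (hB : |wron n φ φ1 u v t₂ + 2 * σ ^ n * φ1 σ| ≤ κ / 2)
    (hε : K * l ^ p ≤ κ / 2) :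
    ∀ r ∈ Icc t₂ b, 0 < u r ∧ u r ≤ l ∧
      |wron n ψ ψ1 u v r - wron n ψ ψ1 u v t₂| ≤ K * l ^ p ∧
      |u r - (wron n ψ ψ1 u v t₂ * φ r - wron n φ φ1 u v t₂ * ψ r) / c| ≤
        2 * K ^ 2 / c * l ^ p := by
  have hat : a < t₂ := hθ1.trans_le ht₂.1
  have hc := L.cpos
  have hdrift : ∀ y ∈ Icc t₂ b, (∀ r ∈ Icc t₂ y, u r ≤ l) →
      |wron n ψ ψ1 u v y - wron n ψ ψ1 u v t₂| ≤ K * l ^ p ∧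
      |wron n φ φ1 u v y - wron n φ φ1 u v t₂| ≤ K * l ^ p := by
    intro y hy hle
    have hf : ∀ r ∈ Icc t₂ y, truncPow p (u r) ≤ l ^ p := fun r hr =>
      truncPow_le (by linarith) hl.le (hle r hr)
    have hin : ∀ {r}, r ∈ Icc t₂ y → r ∈ Ioc a b := fun hr =>
      ⟨hat.trans_le hr.1, hr.2.trans hy.2⟩
    have hin' : ∀ {r}, r ∈ Ioo t₂ y → r ∈ Ioo a b := fun hr =>
      ⟨hat.trans hr.1, hr.2.trans_le hy.2⟩
    have hin2 : ∀ {r}, r ∈ Icc t₂ y → r ∈ Icc (σ - θ) b := fun hr =>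
      ⟨ht₂.1.trans hr.1, hr.2.trans hy.2⟩
    constructor
    · exact wron_drift (L.ha.trans_lt hat) (hy.2.trans L.hb) hy.1 hat hy.2 hu
        (L.cψ.mono fun r hr => hin hr) (L.cψ1.mono fun r hr => hin hr)
        (fun r hr => L.dψ r (hin' hr)) (fun r hr => L.dψ1 r (hin' hr))
        (fun r hr => ⟨(L.ψpos r (hin hr)).le, (hKb r (hin2 hr)).2⟩) hf
    · exact wron_drift (L.ha.trans_lt hat) (hy.2.trans L.hb) hy.1 hat hy.2 hu
        (L.hφ.cu.mono fun r hr => Ioc_subset_Icc_self (hin hr))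
        (L.hφ.cv.mono fun r hr => Ioc_subset_Icc_self (hin hr))
        (fun r hr => L.hφ.du r (hin' hr)) (fun r hr => L.hφ.dv r (hin' hr))
        (fun r hr => ⟨(L.φpos r (Ioc_subset_Icc_self (hin hr))).le, (hKb r (hin2 hr)).1⟩) hf
  have hrob' : ∀ y ∈ Icc t₂ b, (∀ r ∈ Icc t₂ y, u r ≤ l) →
      (y ≤ σ + θ → v y < 0) ∧ 0 < u y ∧ (σ + θ ≤ y → u y < 1 - κ) := by
    intro y hy hle
    obtain ⟨h1, h2⟩ := hdrift y hy hle
    have hyI : y ∈ Ioc a b := ⟨hat.trans_le hy.1, hy.2⟩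
    have h1' := abs_le.1 h1
    have h2' := abs_le.1 h2
    have hA' := abs_le.1 hA
    have hB' := abs_le.1 hB
    obtain ⟨g1, g2, g3⟩ := hrob (wron n ψ ψ1 u v y) (wron n φ φ1 u v y)
      (abs_le.2 ⟨by linarith, by linarith⟩) (abs_le.2 ⟨by linarith, by linarith⟩)
    obtain ⟨e1, e2⟩ := wron_recover L u v hyI
    refine ⟨fun h => ?_, ?_, fun h => ?_⟩
    · have := g1 y ⟨ht₂.1.trans hy.1, h⟩
      rw [e2] at this
      exact neg_of_mul_neg_right this hc.le
    · have := g2 y ⟨ht₂.1.trans hy.1, hy.2⟩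
      rw [e1] at this
      exact pos_of_mul_pos_right this hc.le
    · have := g3 y ⟨h, hy.2⟩
      rw [e1, mul_comm (1 - κ)] at this
      exact lt_of_mul_lt_mul_left this hc.le
  have hle : ∀ y ∈ Icc t₂ b, u y ≤ l := by
    intro y hy
    by_contra hcon
    push Not at hcon
    have hsg := eventually_nhdsWithin_sign_eq_of_deriv_neg (f := fun r => u r - l) (x₀ := t₂)
      (by rw [((hu.du t₂ ⟨hat, ht₂b⟩).sub_const l).deriv]; exact hvt) (by simp [hut])
    obtain ⟨e, he, hball⟩ := Metric.eventually_nhds_iff.1 hsg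
    have hneg : ∀ r, t₂ < r → r < t₂ + e → u r < l := by
      intro r h1 h2
      have := hball (y := r) (by rw [Real.dist_eq, abs_of_pos (by linarith)]; linarith)
      rw [sign_neg (by linarith : t₂ - r < 0)] at this
      linarith [sign_eq_neg_one_iff.1 this]
    have hyt : t₂ + e ≤ y := by
      by_contra hcon'
      push Not at hcon'
      rcases hy.1.lt_or_eq with h1 | h1
      · linarith [hneg y h1 hcon']
      · rw [← h1] at hcon; linarith
    obtain ⟨t, ht, htl, hlt⟩ := exists_first_hit (f := u) (l := l)
      (x := t₂ + e / 2) (y := y) (by linarith)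
      (hu.cu.mono fun r hr => ⟨by linarith [hr.1], hr.2.trans hy.2⟩)
      (hneg (t₂ + e / 2) (by linarith) (by linarith)) hcon.le
    have hle' : ∀ r ∈ Icc t₂ t, u r ≤ l := by
      intro r hr
      rcases hr.2.lt_or_eq with h2 | h2
      · rcases lt_or_ge r (t₂ + e / 2) with h1 | h1
        · rcases hr.1.lt_or_eq with h3 | h3
          · exact (hneg r h3 (by linarith)).le
          · rw [← h3, hut]
        · exact (hlt r ⟨h1, h2⟩).le
      · rw [h2, htl]
    have htb : t ≤ b := ht.2.trans hy.2
    have h2t : t₂ < t := by linarith [ht.1]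
    rcases le_total t (σ + θ) with h | h
    · have hanti : StrictAntiOn u (Icc t₂ t) := strictAntiOn_of_hasDerivAt_neg
        (hu.cu.mono fun r hr => ⟨hat.le.trans hr.1, hr.2.trans htb⟩)
        (fun r hr => hu.du r ⟨hat.trans hr.1, hr.2.trans_le htb⟩)
        (fun r hr => (hrob' r ⟨hr.1.le, hr.2.le.trans htb⟩
          fun x hx => hle' x ⟨hx.1, hx.2.trans hr.2.le⟩).1 (hr.2.le.trans h))
      have := hanti ⟨le_rfl, h2t.le⟩ ⟨h2t.le, le_rfl⟩ h2t
      linarith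
    · have := (hrob' t ⟨h2t.le, htb⟩ hle').2.2 h
      linarith
  intro r hr
  have hle' : ∀ x ∈ Icc t₂ r, u x ≤ l := fun x hx => hle x ⟨hx.1, hx.2.trans hr.2⟩
  obtain ⟨h1, h2⟩ := hdrift r hr hle'
  refine ⟨(hrob' r hr hle').2.1, hle r hr, h1, ?_⟩
  have hrI : r ∈ Ioc a b := ⟨hat.trans_le hr.1, hr.2⟩
  have hrI2 : r ∈ Icc (σ - θ) b := ⟨ht₂.1.trans hr.1, hr.2⟩
  have e1 := (wron_recover L u v hrI).1
  have e2 : u r - (wron n ψ ψ1 u v t₂ * φ r - wron n φ φ1 u v t₂ * ψ r) / c =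
      ((wron n ψ ψ1 u v r - wron n ψ ψ1 u v t₂) * φ r -
        (wron n φ φ1 u v r - wron n φ φ1 u v t₂) * ψ r) / c := by
    field_simp
    linarith
  have h3 : ∀ {x y : ℝ}, |x| ≤ K * l ^ p → 0 < y → y ≤ K → |x * y| ≤ K * l ^ p * K := by
    intro x y hx hy hyK
    rw [abs_mul, abs_of_pos hy]
    exact mul_le_mul hx hyK hy.le (by positivity)
  have h4 := abs_le.1 (h3 h1 (L.φpos r (Ioc_subset_Icc_self hrI)) (hKb r hrI2).1)
  have h5 := abs_le.1 (h3 h2 (L.ψpos r hrI) (hKb r hrI2).2)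
  rw [e2, abs_div, abs_of_pos hc, div_mul_eq_mul_div]
  gcongr
  rw [abs_le]
  constructor <;> nlinarith

end

section

variable {n : ℕ} {a b c σ : ℝ} {φ φ1 ψ ψ1 : ℝ → ℝ}

/-! ### Asymptotics of the shooting solutions -/

/-- Limit, at the exit of a layer located at `s`, of the Wronskian with `ψ`. -/
noncomputable def Alim (n : ℕ) (φ φ1 ψ ψ1 : ℝ → ℝ) (s : ℝ) : ℝ :=
  s ^ n * (-(φ1 s / φ s) * ψ s - 1 * ψ1 s)

/-- Limit, at the exit of a layer located at `s`, of the Wronskian with `φ`. -/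
noncomputable def Blim (n : ℕ) (φ φ1 : ℝ → ℝ) (s : ℝ) : ℝ :=
  s ^ n * (-(φ1 s / φ s) * φ s - 1 * φ1 s)

lemma LinData.continuousAt (L : LinData n a b c σ φ φ1 ψ ψ1) {s : ℝ} (hs : s ∈ Ioo a b) :
    ContinuousAt φ s ∧ ContinuousAt φ1 s ∧ ContinuousAt ψ s ∧ ContinuousAt ψ1 s :=
  ⟨L.hφ.cu.continuousAt (Icc_mem_nhds hs.1 hs.2), L.hφ.cv.continuousAt (Icc_mem_nhds hs.1 hs.2),
    L.cψ.continuousAt (Ioc_mem_nhds hs.1 hs.2), L.cψ1.continuousAt (Ioc_mem_nhds hs.1 hs.2)⟩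

lemma LinData.Alim_eq (L : LinData n a b c σ φ φ1 ψ ψ1) {s : ℝ} (hs : s ∈ Ioo a b) :
    Alim n φ φ1 ψ ψ1 s = -(s ^ n / φ s) * (φ1 s * ψ s + φ s * ψ1 s) := by
  have := L.φpos s (Ioo_subset_Icc_self hs)
  rw [Alim]
  field_simp
  ring

lemma LinData.Blim_eq (L : LinData n a b c σ φ φ1 ψ ψ1) {s : ℝ} (hs : s ∈ Ioo a b) :
    Blim n φ φ1 s = -(2 * s ^ n * φ1 s) := by
  have := L.φpos s (Ioo_subset_Icc_self hs)
  rw [Blim]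
  field_simp
  ring

lemma LinData.ABlim (L : LinData n a b c σ φ φ1 ψ ψ1) {s : ℝ} (hs : s ∈ Ioo a b) :
    (Alim n φ φ1 ψ ψ1 s * φ s - Blim n φ φ1 s * ψ s) / c = 1 := by
  have h := L.wr s (Ioo_subset_Ioc_self hs)
  have hc := L.cpos
  rw [div_eq_one_iff_eq hc.ne', ← h, Alim, Blim]
  ring

/-- Behaviour of the shooting solutions `u p` with `u p a = φ a / φ (s p)`, `s p → s₀`, when `s₀` is
close to the reflection point. -/
lemma full_asymptotics (L : LinData n a b c σ φ φ1 ψ ψ1) :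
    ∃ η > 0, ∀ s₀, |s₀ - σ| < η → s₀ ∈ Ioo a b ∧ ∀ (s : ℝ → ℝ) (u v : ℝ → ℝ → ℝ),
      Tendsto s atTop (𝓝 s₀) →
      (∀ᶠ p in atTop, Sol n a b (fun x => x - truncPow p x) (u p) (v p) ∧
        u p a = φ a / φ (s p)) →
      ∃ t₁ t₂ α : ℝ → ℝ, Tendsto t₁ atTop (𝓝 s₀) ∧ Tendsto t₂ atTop (𝓝 s₀) ∧
        Tendsto (fun p => wron n ψ ψ1 (u p) (v p) b) atTop (𝓝 (Alim n φ φ1 ψ ψ1 s₀)) ∧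
        (∀ r ∈ Ico a s₀, Tendsto (fun p => u p r) atTop (𝓝 (φ r / φ s₀))) ∧
        Tendsto (fun p => u p s₀) atTop (𝓝 1) ∧
        (∀ r ∈ Ioc s₀ b, Tendsto (fun p => u p r) atTop
          (𝓝 ((Alim n φ φ1 ψ ψ1 s₀ * φ r - Blim n φ φ1 s₀ * ψ r) / c))) ∧
        ∀ᶠ p in atTop, a < t₁ p ∧ t₁ p < α p ∧ α p < t₂ p ∧ t₂ p < b ∧
          (∀ r ∈ Icc a b, 0 < u p r ∧ u p r ≤ 2) ∧
          (∀ r ∈ Ioo a (α p), 0 < v p r) ∧ (∀ r ∈ Ioc (α p) (t₂ p), v p r < 0) ∧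
          ∀ r ∈ Icc (t₂ p) b, u p r ≤ lo p := by
  obtain ⟨θ, hθ, κ, hκ, K, hK, hθ1, hθ2, hKb, hrob⟩ := L.robust
  obtain ⟨cφ, cφ1, cψ, cψ1⟩ := L.continuousAt L.σmem
  have hφσ := L.φpos σ (Ioo_subset_Icc_self L.σmem)
  have hcA : ContinuousAt (Alim n φ φ1 ψ ψ1) σ :=
    (continuousAt_id.pow n).mul ((((cφ1.div cφ hφσ.ne').neg).mul cψ).sub (continuousAt_const.mul cψ1))
  have hcB : ContinuousAt (Blim n φ φ1) σ :=
    (continuousAt_id.pow n).mul ((((cφ1.div cφ hφσ.ne').neg).mul cφ).sub (continuousAt_const.mul cφ1))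
  have hA0 : Alim n φ φ1 ψ ψ1 σ = 0 := by rw [L.Alim_eq L.σmem, L.refl, mul_zero]
  have hB0 := L.Blim_eq L.σmem
  have evA : ∀ᶠ s in 𝓝 σ, |Alim n φ φ1 ψ ψ1 s| < κ / 2 :=
    hcA.abs.eventually_lt_const (by simp [hA0, hκ])
  have evB : ∀ᶠ s in 𝓝 σ, |Blim n φ φ1 s + 2 * σ ^ n * φ1 σ| < κ / 2 :=
    (hcB.add continuousAt_const).abs.eventually_lt_const (by simp [hB0, hκ])
  have evI : ∀ᶠ s in 𝓝 σ, s ∈ Ioo (σ - θ) (σ + θ) := Ioo_mem_nhds (by linarith) (by linarith)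
  obtain ⟨η, hη, hball⟩ := Metric.eventually_nhds_iff.1 (evA.and (evB.and evI))
  refine ⟨η, hη, fun s₀ hs₀ => ?_⟩
  obtain ⟨hA, hB, hI⟩ := hball (y := s₀) (by rwa [Real.dist_eq])
  have hs₀I : s₀ ∈ Ioo a b := ⟨hθ1.trans hI.1, hI.2.trans hθ2⟩
  refine ⟨hs₀I, fun s u v hs hu => ?_⟩
  obtain ⟨t₁, t₂, α, ht₁, ht₂, hv₂, hev⟩ := layer_asymptotics L hs₀I hs hu
  obtain ⟨cφ, cφ1, cψ, cψ1⟩ := L.continuousAt hs₀I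
  have hφs := L.φpos s₀ (Ioo_subset_Icc_self hs₀I)
  have hu₂ : Tendsto (fun p => u p (t₂ p)) atTop (𝓝 1) := by
    refine tendsto_lo.congr' ?_
    filter_upwards [hev] with p hp using hp.2.2.2.2.1.symm
  have hwA : Tendsto (fun p => wron n ψ ψ1 (u p) (v p) (t₂ p)) atTop (𝓝 (Alim n φ φ1 ψ ψ1 s₀)) :=
    (ht₂.pow n).mul ((hv₂.mul (cψ.tendsto.comp ht₂)).sub (hu₂.mul (cψ1.tendsto.comp ht₂)))
  have hwB : Tendsto (fun p => wron n φ φ1 (u p) (v p) (t₂ p)) atTop (𝓝 (Blim n φ φ1 s₀)) :=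
    (ht₂.pow n).mul ((hv₂.mul (cφ.tendsto.comp ht₂)).sub (hu₂.mul (cφ1.tendsto.comp ht₂)))
  have hright : ∀ᶠ p in atTop, ∀ r ∈ Icc (t₂ p) b, 0 < u p r ∧ u p r ≤ lo p ∧
      |wron n ψ ψ1 (u p) (v p) r - wron n ψ ψ1 (u p) (v p) (t₂ p)| ≤ K * lo p ^ p ∧
      |u p r - (wron n ψ ψ1 (u p) (v p) (t₂ p) * φ r - wron n φ φ1 (u p) (v p) (t₂ p) * ψ r) / c| ≤
        2 * K ^ 2 / c * lo p ^ p := by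
    filter_upwards [hu, hev, eventually_levels, hwA.abs.eventually_lt_const hA,
      (hwB.add_const (2 * σ ^ n * φ1 σ)).abs.eventually_lt_const hB,
      (tendsto_lo_pow_mul K).eventually_lt_const (half_pos hκ),
      tendsto_lo.eventually_const_lt (by linarith : 1 - κ < 1),
      ht₂.eventually (Ioo_mem_nhds hI.1 hI.2)] with p h1 h2 h3 h4 h5 h6 h7 h8
    exact right_region L hθ1 hK hKb hrob h3.1 h3.2.1 h7 h1.1 (Ioo_subset_Icc_self h8) h2.2.2.2.1
      h2.2.2.2.2.1 (h2.2.2.2.2.2.2.2.2.1 _ ⟨h2.2.2.1, le_rfl⟩) h4.le h5.le h6.le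
  have hφsp : Tendsto (fun p => φ (s p)) atTop (𝓝 (φ s₀)) := cφ.tendsto.comp hs
  have hleft_lim : ∀ r, Tendsto (fun p => φ r / φ (s p)) atTop (𝓝 (φ r / φ s₀)) := fun r =>
    tendsto_const_nhds.div hφsp hφs.ne'
  have hright_lim : ∀ r, Tendsto (fun p => (wron n ψ ψ1 (u p) (v p) (t₂ p) * φ r -
      wron n φ φ1 (u p) (v p) (t₂ p) * ψ r) / c) atTop
      (𝓝 ((Alim n φ φ1 ψ ψ1 s₀ * φ r - Blim n φ φ1 s₀ * ψ r) / c)) := fun r =>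
    ((hwA.mul_const _).sub (hwB.mul_const _)).div_const c
  -- to pass from an estimate `|u - w| → 0` to convergence
  have hclose : ∀ {w e x : ℝ → ℝ} {y : ℝ}, Tendsto w atTop (𝓝 y) → Tendsto e atTop (𝓝 0) →
      (∀ᶠ p in atTop, |x p - w p| ≤ e p) → Tendsto x atTop (𝓝 y) := by
    intro w e x y hw he hx
    have := (squeeze_zero_norm' hx he).add hw
    simpa using this
  refine ⟨t₁, t₂, α, ht₁, ht₂, ?_, ?_, ?_, ?_, ?_⟩
  · refine hclose hwA (tendsto_lo_pow_mul K) ?_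
    filter_upwards [hright, hev] with p hp h
    exact (hp b ⟨h.2.2.2.1.le, le_rfl⟩).2.2.1
  · intro r hr
    refine hclose (hleft_lim r) (tendsto_lo_pow_mul (φ b ^ 2 / φ a ^ 2)) ?_
    filter_upwards [hev, ht₁.eventually_const_lt hr.2] with p h h1
    exact h.2.2.2.2.2.2.2.2.2 r ⟨hr.1, h1.le⟩
  · have hl := (hleft_lim s₀).sub_const 1
    have hr := (hright_lim s₀).sub_const 1
    rw [div_self hφs.ne', sub_self] at hl
    rw [L.ABlim hs₀I, sub_self] at hr
    have he := ((hl.abs.add hr.abs).add tendsto_inv_sqrt).add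
      ((tendsto_lo_pow_mul (φ b ^ 2 / φ a ^ 2)).add (tendsto_lo_pow_mul (2 * K ^ 2 / c)))
    simp only [abs_zero, add_zero] at he
    refine hclose (tendsto_const_nhds (x := (1 : ℝ))) he ?_
    filter_upwards [hev, hright, eventually_levels] with p h1 h2 h3
    have hlp : 0 ≤ lo p ^ p := rpow_nonneg h3.2.1.le _
    have hc := L.cpos
    have hx : 0 ≤ φ b ^ 2 / φ a ^ 2 * lo p ^ p := by positivity
    have hy : 0 ≤ 2 * K ^ 2 / c * lo p ^ p := by positivity
    have hz : 0 ≤ 1 / √p := by positivity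
    have g1 := abs_nonneg (φ s₀ / φ (s p) - 1)
    have g2 := abs_nonneg ((wron n ψ ψ1 (u p) (v p) (t₂ p) * φ s₀ -
      wron n φ φ1 (u p) (v p) (t₂ p) * ψ s₀) / c - 1)
    rcases le_total s₀ (t₁ p) with h | h
    · have h4 := h1.2.2.2.2.2.2.2.2.2 s₀ ⟨hs₀I.1.le, h⟩
      have h5 := abs_sub_le (u p s₀) (φ s₀ / φ (s p)) 1
      linarith
    · rcases le_total s₀ (t₂ p) with h' | h'
      · obtain ⟨h4, h5⟩ := h1.2.2.2.2.2.2.1 s₀ ⟨h, h'⟩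
        simp only [lo, hi] at h4 h5
        have : |u p s₀ - 1| ≤ 1 / √p := abs_le.2 ⟨by linarith, by linarith⟩
        linarith
      · have h4 := (h2 s₀ ⟨h', hs₀I.2.le⟩).2.2.2
        have h5 := abs_sub_le (u p s₀) ((wron n ψ ψ1 (u p) (v p) (t₂ p) * φ s₀ -
          wron n φ φ1 (u p) (v p) (t₂ p) * ψ s₀) / c) 1
        linarith
  · intro r hr
    refine hclose (hright_lim r) (tendsto_lo_pow_mul (2 * K ^ 2 / c)) ?_
    filter_upwards [hright, ht₂.eventually_lt_const hr.1] with p h h1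
    exact (h r ⟨h1.le, hr.2⟩).2.2.2
  · filter_upwards [hev, hright, eventually_levels] with p h1 h2 h3
    obtain ⟨g1, g2, g3, g4, g5, g6, g7, g8, g9, -⟩ := h1
    refine ⟨g1, g2, g3, g4, fun r hr => ?_, g8, g9, fun r hr => (h2 r hr).2.1⟩
    rcases le_total r (t₁ p) with h | h
    · have := g6 r ⟨hr.1, h⟩
      exact ⟨this.1, by linarith⟩
    · rcases le_total r (t₂ p) with h' | h'
      · have := g7 r ⟨h, h'⟩
        exact ⟨by linarith, by linarith⟩
      · have := h2 r ⟨h', hr.2⟩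
        exact ⟨this.1, by linarith⟩

end

section

variable {n : ℕ} {a b c σ : ℝ} {φ φ1 ψ ψ1 : ℝ → ℝ}

/-! ### Shooting -/

/-- Solutions of `P p s` found, for large `p`, at every prescribed distance from `y` can be chosen
to converge to `y`: take near-minimisers of the distance to `y`. -/
lemma exists_tendsto_of_forall {P : ℝ → ℝ → Prop} {y : ℝ}
    (h : ∀ e > 0, ∀ᶠ p in atTop, ∃ s, |s - y| < e ∧ P p s) :
    ∃ s : ℝ → ℝ, Tendsto s atTop (𝓝 y) ∧ ∀ᶠ p in atTop, P p (s p) := by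
  have hex : ∀ p : ℝ, ∃ s, 0 < p → (∃ x, P p x) →
      P p s ∧ dist y s < Metric.infDist y {x | P p x} + 1 / p := by
    intro p
    by_cases hp : 0 < p ∧ ∃ x, P p x
    · obtain ⟨s, hs, hs'⟩ := (Metric.infDist_lt_iff (s := {x | P p x}) (x := y) hp.2).1
        (lt_add_of_pos_right _ (one_div_pos.2 hp.1))
      exact ⟨s, fun _ _ => ⟨hs, hs'⟩⟩
    · exact ⟨0, fun h1 h2 => absurd ⟨h1, h2⟩ hp⟩
  choose s hs using hex
  have hev : ∀ᶠ p in atTop, ∃ x, P p x :=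
    (h 1 one_pos).mono fun p ⟨x, hx⟩ => ⟨x, hx.2⟩
  refine ⟨s, ?_, ?_⟩
  · rw [Metric.tendsto_nhds]
    intro e he
    filter_upwards [h (e / 2) (half_pos he), eventually_gt_atTop 0, eventually_gt_atTop (2 / e)]
      with p ⟨x, hx, hPx⟩ hp0 hp
    have h1 := (hs p hp0 ⟨x, hPx⟩).2
    have h2 : Metric.infDist y {x | P p x} ≤ dist y x := Metric.infDist_le_dist_of_mem hPx
    have h3 : 1 / p < e / 2 := by
      rw [div_lt_iff₀ hp0]
      rw [div_lt_iff₀ he] at hp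
      linarith
    rw [dist_comm y x, Real.dist_eq] at h2
    rw [dist_comm]
    linarith
  · filter_upwards [hev, eventually_gt_atTop 0] with p h1 h2 using (hs p h2 h1).1

/-- For large `p` the slope at `b` changes sign as the shooting parameter `s` crosses `σ`; the
parameters at which it vanishes converge to `σ` and give the required solutions. -/
lemma shooting (L : LinData n a b c σ φ φ1 ψ ψ1) :
    ∃ (u v : ℝ → ℝ → ℝ) (α : ℝ → ℝ),
      (∀ᶠ p in atTop, ContDiffOn ℝ 2 (u p) (Icc a b) ∧ (∀ r, HasDerivAt (u p) (v p r) r) ∧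
        v p a = 0 ∧ v p b = 0 ∧
        (∀ r ∈ Ioo a b, HasDerivAt (v p) (u p r - u p r ^ p - n / r * v p r) r) ∧
        (∀ r ∈ Icc a b, 0 < u p r) ∧ α p ∈ Ioo a b ∧
        StrictMonoOn (u p) (Icc a (α p)) ∧ StrictAntiOn (u p) (Icc (α p) b)) ∧
      Tendsto α atTop (𝓝 σ) ∧
      ∀ r ∈ Icc a b, Tendsto (fun p => u p r) atTop
        (𝓝 (if r ≤ σ then φ r / φ σ else ψ r / ψ σ)) := by
  have hivp : ∀ p : ℝ, ∃ u v : ℝ → ℝ → ℝ, 1 ≤ p →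
      (∀ δ, Sol n a b (fun x => x - truncPow p x) (u δ) (v δ) ∧ u δ a = δ ∧
        (∀ r, HasDerivAt (u δ) (v δ r) r) ∧ ContDiffOn ℝ 2 (u δ) (Icc a b)) ∧
      Continuous (fun δ => v δ b) := by
    intro p
    by_cases hp : 1 ≤ p
    · obtain ⟨K, hK⟩ := lipschitz_sub_truncPow hp
      obtain ⟨u, v, h⟩ := exists_ivp n L.ha L.hab hK
      exact ⟨u, v, fun _ => h⟩
    · exact ⟨0, 0, fun h => absurd h hp⟩
  choose U V hUV using hivp
  obtain ⟨η, hη, hfull⟩ := full_asymptotics L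
  have hsol : ∀ s : ℝ → ℝ, ∀ᶠ p in atTop, Sol n a b (fun x => x - truncPow p x)
      (U p (φ a / φ (s p))) (V p (φ a / φ (s p))) ∧
      U p (φ a / φ (s p)) a = φ a / φ (s p) := by
    intro s
    filter_upwards [eventually_ge_atTop 1] with p hp
    exact ⟨((hUV p hp).1 _).1, ((hUV p hp).1 _).2.1⟩
  have hb0 : 0 < b := L.ha.trans_lt L.hab
  have hψb := L.ψpos b ⟨L.hab, le_rfl⟩
  have hbn : 0 < b ^ n * ψ b := by positivity
  have hwb : ∀ u v : ℝ → ℝ, wron n ψ ψ1 u v b = b ^ n * ψ b * v b := by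
    intro u v
    simp only [wron, L.ψ1b]; ring
  -- the slope at `b` has the sign of `σ - s₀` for fixed `s₀` near `σ` and large `p`
  have hpos : ∀ s₀, |s₀ - σ| < η → s₀ < σ → ∀ᶠ p in atTop, 0 < V p (φ a / φ s₀) b := by
    intro s₀ h1 h2
    obtain ⟨hI, hf⟩ := hfull s₀ h1
    obtain ⟨-, -, -, -, -, hA, -⟩ := hf (fun _ => s₀) (fun p => U p (φ a / φ s₀))
      (fun p => V p (φ a / φ s₀)) tendsto_const_nhds (hsol _)
    have hA0 : 0 < Alim n φ φ1 ψ ψ1 s₀ := by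
      rw [L.Alim_eq hI]
      have := L.φpos s₀ (Ioo_subset_Icc_self hI)
      have h0 : 0 < s₀ := L.ha.trans_lt hI.1
      have h3 : 0 < s₀ ^ n / φ s₀ := by positivity
      nlinarith [L.refl_neg s₀ ⟨hI.1, h2⟩]
    filter_upwards [hA.eventually_const_lt hA0] with p hp
    rw [hwb] at hp
    exact pos_of_mul_pos_right hp hbn.le
  have hneg : ∀ s₀, |s₀ - σ| < η → σ < s₀ → ∀ᶠ p in atTop, V p (φ a / φ s₀) b < 0 := by
    intro s₀ h1 h2
    obtain ⟨hI, hf⟩ := hfull s₀ h1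
    obtain ⟨-, -, -, -, -, hA, -⟩ := hf (fun _ => s₀) (fun p => U p (φ a / φ s₀))
      (fun p => V p (φ a / φ s₀)) tendsto_const_nhds (hsol _)
    have hA0 : Alim n φ φ1 ψ ψ1 s₀ < 0 := by
      rw [L.Alim_eq hI]
      have := L.φpos s₀ (Ioo_subset_Icc_self hI)
      have h0 : 0 < s₀ := L.ha.trans_lt hI.1
      have h3 : 0 < s₀ ^ n / φ s₀ := by positivity
      nlinarith [L.refl_pos s₀ ⟨h2, hI.2⟩]
    filter_upwards [hA.eventually_lt_const hA0] with p hp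
    rw [hwb] at hp
    exact neg_of_mul_neg_right hp hbn.le
  have hzero : ∀ e > 0, ∀ᶠ p in atTop, ∃ s, |s - σ| < e ∧ V p (φ a / φ s) b = 0 := by
    intro e he
    set e' := min e η / 2 with he'
    have he0 : 0 < e' := half_pos (lt_min he hη)
    have he1 : e' < e := by have := min_le_left e η; linarith
    have he2 : e' < η := by have := min_le_right e η; linarith
    have hm : |σ - e' - σ| < η := by
      rw [show σ - e' - σ = -e' by ring, abs_neg, abs_of_pos he0]; exact he2
    have hp' : |σ + e' - σ| < η := by
      rw [show σ + e' - σ = e' by ring, abs_of_pos he0]; exact he2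
    have hIm := (hfull _ hm).1
    have hIp := (hfull _ hp').1
    filter_upwards [hpos _ hm (by linarith), hneg _ hp' (by linarith), eventually_ge_atTop 1]
      with p h1 h2 h3
    have hsub : Icc (σ - e') (σ + e') ⊆ Icc a b := fun r hr =>
      ⟨hIm.1.le.trans hr.1, hr.2.trans hIp.2.le⟩
    have hcont : ContinuousOn (fun s => V p (φ a / φ s) b) (Icc (σ - e') (σ + e')) :=
      (hUV p h3).2.comp_continuousOn
        (continuousOn_const.div (L.hφ.cu.mono hsub) fun r hr => (L.φpos r (hsub hr)).ne')
    obtain ⟨s, hs, hs0⟩ := intermediate_value_Icc' (by linarith) hcont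
      (show (0 : ℝ) ∈ Icc _ _ from ⟨h2.le, h1.le⟩)
    refine ⟨s, ?_, hs0⟩
    have : |s - σ| ≤ e' := abs_le.2 ⟨by linarith [hs.1], by linarith [hs.2]⟩
    linarith
  obtain ⟨s, hs, hs0⟩ := exists_tendsto_of_forall hzero
  obtain ⟨-, hf⟩ := hfull σ (by simpa using hη)
  obtain ⟨t₁, t₂, α, ht₁, ht₂, -, hl, hm, hr, hev⟩ := hf s (fun p => U p (φ a / φ (s p)))
    (fun p => V p (φ a / φ (s p))) hs (hsol s)
  refine ⟨fun p => U p (φ a / φ (s p)), fun p => V p (φ a / φ (s p)), α, ?_, ?_, ?_⟩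
  · filter_upwards [hev, hs0, eventually_ge_atTop 1, eventually_levels] with p h1 h2 h3 h4
    obtain ⟨hS, hua, hd, hC⟩ := (hUV p h3).1 (φ a / φ (s p))
    obtain ⟨g1, g2, g3, g4, g5, g6, g7, g8⟩ := h1
    set u := U p (φ a / φ (s p))
    set v := V p (φ a / φ (s p))
    have hαI : α p ∈ Ioo a b := ⟨g1.trans g2, g3.trans g4⟩
    have hat₂ : a < t₂ p := hαI.1.trans g3
    -- to the right of the layer `r^n v` increases to its value `0` at `b`
    have hmono : StrictMonoOn (fun r => r ^ n * v r) (Icc (t₂ p) b) :=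
      strictMonoOn_of_hasDerivAt_pos
        (((continuousOn_id.pow n).mul hS.cv).mono (Icc_subset_Icc_left hat₂.le))
        (fun r hr => hasDerivAt_pow_mul (L.ha.trans_lt (hat₂.trans hr.1))
          (hS.dv r ⟨hat₂.trans hr.1, hr.2⟩)) (by
        intro r hr
        have h5 := g5 r ⟨(hat₂.trans hr.1).le, hr.2.le⟩
        have h6 := g8 r (Ioo_subset_Icc_self hr)
        have h0 : 0 < r := L.ha.trans_lt (hat₂.trans hr.1)
        rw [truncPow_eq h5.1.le h5.2]
        have h7 := rpow_lt_rpow_of_exponent_gt h5.1 (by linarith [h4.2.2.1]) h4.1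
        rw [rpow_one] at h7
        exact mul_pos (by positivity) (by linarith))
    have hvneg : ∀ r ∈ Ioo (α p) b, v r < 0 := by
      intro r hr
      rcases le_or_gt r (t₂ p) with h | h
      · exact g7 r ⟨hr.1, h⟩
      · have h5 := hmono ⟨h.le, hr.2.le⟩ ⟨g4.le, le_rfl⟩ hr.2
        simp only [h2, mul_zero] at h5
        exact neg_of_mul_neg_right h5 (pow_pos (L.ha.trans_lt (hat₂.trans h)) n).le
    refine ⟨hC, hd, hS.va, h2, fun r hr => ?_, fun r hr => (g5 r hr).1, hαI, ?_, ?_⟩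
    · have h5 := g5 r (Ioo_subset_Icc_self hr)
      have := hS.dv r hr
      rwa [truncPow_eq h5.1.le h5.2] at this
    · exact strictMonoOn_of_hasDerivAt_pos (hS.cu.mono (Icc_subset_Icc_right hαI.2.le))
        (fun r _ => hd r) g6
    · exact strictAntiOn_of_hasDerivAt_neg (hS.cu.mono (Icc_subset_Icc_left hαI.1.le))
        (fun r _ => hd r) hvneg
  · refine tendsto_of_tendsto_of_tendsto_of_le_of_le' ht₁ ht₂ ?_ ?_
    · filter_upwards [hev] with p hp using hp.2.1.le
    · filter_upwards [hev] with p hp using hp.2.2.1.le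
  · intro r hrI
    have hφσ := L.φpos σ (Ioo_subset_Icc_self L.σmem)
    have hψσ := L.ψpos σ (Ioo_subset_Ioc_self L.σmem)
    rcases lt_trichotomy r σ with h | h | h
    · rw [if_pos h.le]
      exact hl r ⟨hrI.1, h⟩
    · rw [h, if_pos le_rfl, div_self hφσ.ne']
      exact hm
    · rw [if_neg (not_le.2 h)]
      have h1 := hr r ⟨h, hrI.2⟩
      have hA0 : Alim n φ φ1 ψ ψ1 σ = 0 := by rw [L.Alim_eq L.σmem, L.refl, mul_zero]
      have h2 := L.ABlim L.σmem
      have hc := L.cpos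
      rw [hA0] at h1 h2
      have h3 : (0 * φ r - Blim n φ φ1 σ * ψ r) / c = ψ r / ψ σ := by
        rw [div_eq_one_iff_eq hc.ne'] at h2
        rw [← h2]
        have hB : Blim n φ φ1 σ ≠ 0 := fun h0 => by rw [h0] at h2; linarith
        field_simp
        ring
      rwa [h3] at h1

end

/-! ### The fundamental solutions on `[a,b]` -/

/-- A `C²` function on `s` has continuous one-sided first and second derivatives, which are the usual
ones in the interior. -/
lemma hasDerivAt_of_contDiffOn_two {f : ℝ → ℝ} {s : Set ℝ} (hs : UniqueDiffOn ℝ s)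
    (hf : ContDiffOn ℝ 2 f s) :
    ContinuousOn (derivWithin f s) s ∧
    ContinuousOn (derivWithin (derivWithin f s) s) s ∧
    (∀ r, s ∈ 𝓝 r → HasDerivAt f (derivWithin f s r) r ∧
      HasDerivAt (derivWithin f s) (deriv (deriv f) r) r ∧
      deriv (deriv f) r = derivWithin (derivWithin f s) s r) := by
  have h1 : ContDiffOn ℝ 1 (derivWithin f s) s := hf.derivWithin hs (by norm_num)
  have h2 : ContDiffOn ℝ 0 (derivWithin (derivWithin f s) s) s := h1.derivWithin hs (by norm_num)
  refine ⟨h1.continuousOn, h2.continuousOn, fun r hr => ?_⟩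
  have e1 : ∀ x, s ∈ 𝓝 x → HasDerivAt f (derivWithin f s x) x := fun x hx =>
    ((hf.differentiableOn (by norm_num) x (mem_of_mem_nhds hx)).hasDerivWithinAt).hasDerivAt hx
  have e2 : HasDerivAt (derivWithin f s) (derivWithin (derivWithin f s) s r) r :=
    ((h1.differentiableOn (by norm_num) r (mem_of_mem_nhds hr)).hasDerivWithinAt).hasDerivAt hr
  have e3 : deriv f =ᶠ[𝓝 r] derivWithin f s := by
    filter_upwards [eventually_mem_nhds_iff.2 hr] with x hx using (e1 x hx).deriv
  have e4 := e3.deriv_eq.trans e2.deriv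
  exact ⟨e1 r hr, e4 ▸ e2, e4⟩

/-- The properties of the fundamental solutions `ξ`, `ζ` that are used below, with `ξ1`, `ζ1` the
derivatives, one-sided at the endpoints. -/
structure FundData (n : ℕ) (ξ ξ1 ζ ζ1 : ℝ → ℝ) : Prop where
  cξ : ContinuousOn ξ (Icc 0 1)
  cξ1 : ContinuousOn ξ1 (Icc 0 1)
  cζ : ContinuousOn ζ (Ioc 0 1)
  cζ1 : ContinuousOn ζ1 (Ioc 0 1)
  dξ : ∀ r ∈ Ioo (0 : ℝ) 1, HasDerivAt ξ (ξ1 r) r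
  dξ1 : ∀ r ∈ Ioo (0 : ℝ) 1, HasDerivAt ξ1 (ξ r - n / r * ξ1 r) r
  dζ : ∀ r ∈ Ioo (0 : ℝ) 1, HasDerivAt ζ (ζ1 r) r
  dζ1 : ∀ r ∈ Ioo (0 : ℝ) 1, HasDerivAt ζ1 (ζ r - n / r * ζ1 r) r
  ξpos : ∀ r ∈ Icc (0 : ℝ) 1, 0 < ξ r
  ζpos : ∀ r ∈ Ioc (0 : ℝ) 1, 0 < ζ r
  ξ1zero : ξ1 0 = 0
  ξ1pos : ∀ r ∈ Ioc (0 : ℝ) 1, 0 < ξ1 r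
  ζ1one : ζ1 1 = 0
  ζ1neg : ∀ r ∈ Ioo (0 : ℝ) 1, ζ1 r < 0
  wr : ∀ r ∈ Ioc (0 : ℝ) 1, r ^ n * (ξ1 r * ζ r - ξ r * ζ1 r) = 1
  lim : Tendsto (fun r => r ^ n * (ξ1 r * ζ r)) (𝓝[>] 0) (𝓝 0)

/-- If `v' = x - (n/r) v`, that is `(rⁿ v)' = rⁿ x`, with a positive `x` and `v` vanishes at the left end, it is
positive afterwards. -/
lemma pos_of_left_zero {n : ℕ} {x v : ℝ → ℝ} {a b : ℝ} (ha : 0 ≤ a)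
    (cv : ContinuousOn v (Icc a b)) (dv : ∀ r ∈ Ioo a b, HasDerivAt v (x r - n / r * v r) r)
    (hx : ∀ r ∈ Ioo a b, 0 < x r) (va : v a = 0) : ∀ r ∈ Ioc a b, 0 < v r := by
  intro r hr
  have hm : StrictMonoOn (fun r => r ^ n * v r) (Icc a b) :=
    strictMonoOn_of_hasDerivAt_pos ((continuous_pow n).continuousOn.mul cv)
      (fun s hs => hasDerivAt_pow_mul (ha.trans_lt hs.1) (dv s hs))
      fun s hs => mul_pos (pow_pos (ha.trans_lt hs.1) n) (hx s hs)
  have h := hm (left_mem_Icc.2 (hr.1.le.trans hr.2)) ⟨hr.1.le, hr.2⟩ hr.1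
  simp only [va, mul_zero] at h
  exact pos_of_mul_pos_right h (pow_nonneg (ha.trans hr.1.le) n)

/-- The counterpart of `pos_of_left_zero` for a zero of `v` at the right end. -/
lemma neg_of_right_zero {n : ℕ} {x v : ℝ → ℝ} {a b : ℝ} (ha : 0 ≤ a)
    (cv : ContinuousOn v (Ioc a b)) (dv : ∀ r ∈ Ioo a b, HasDerivAt v (x r - n / r * v r) r)
    (hx : ∀ r ∈ Ioo a b, 0 < x r) (vb : v b = 0) : ∀ r ∈ Ioo a b, v r < 0 := by
  intro r hr
  have hm : StrictMonoOn (fun r => r ^ n * v r) (Icc r b) :=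
    strictMonoOn_of_hasDerivAt_pos
      ((continuous_pow n).continuousOn.mul
        (cv.mono fun s hs => ⟨hr.1.trans_le hs.1, hs.2⟩))
      (fun s hs => hasDerivAt_pow_mul (ha.trans_lt (hr.1.trans hs.1))
        (dv s ⟨hr.1.trans hs.1, hs.2⟩))
      fun s hs => mul_pos (pow_pos (ha.trans_lt (hr.1.trans hs.1)) n)
        (hx s ⟨hr.1.trans hs.1, hs.2⟩)
  have h := hm (left_mem_Icc.2 hr.2.le) (right_mem_Icc.2 hr.2.le) hr.2
  simp only [vb, mul_zero] at h
  exact neg_of_mul_neg_right h (pow_nonneg (ha.trans hr.1.le) n)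

lemma GreenData.fundData {N : ℕ} (hN : 3 ≤ N) (d : GreenData N) :
    FundData (N - 1) d.xi (derivWithin d.xi (Icc 0 1)) d.zeta (derivWithin d.zeta (Ioc 0 1)) := by
  have hcast : ((N - 1 : ℕ) : ℝ) = (N : ℝ) - 1 := by
    rw [Nat.cast_sub (by omega)]; simp
  have hn0 : ((N - 1 : ℕ) : ℝ) ≠ 0 := by
    have : N - 1 ≠ 0 := by omega
    exact_mod_cast this
  have hu : UniqueDiffOn ℝ (Icc (0 : ℝ) 1) := uniqueDiffOn_Icc one_pos
  have hu' : UniqueDiffOn ℝ (Ioc (0 : ℝ) 1) := uniqueDiffOn_Ioc _ _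
  obtain ⟨cξ1, cξ2, hξ⟩ := hasDerivAt_of_contDiffOn_two hu d.xi_smooth
  obtain ⟨cζ1, -, hζ⟩ := hasDerivAt_of_contDiffOn_two hu' d.zeta_smooth
  set ξ1 := derivWithin d.xi (Icc 0 1) with hξ1
  set ζ1 := derivWithin d.zeta (Ioc 0 1) with hζ1
  have n1 : ∀ r ∈ Ioo (0 : ℝ) 1, Icc (0 : ℝ) 1 ∈ 𝓝 r := fun r hr => Icc_mem_nhds hr.1 hr.2
  have n2 : ∀ r ∈ Ioo (0 : ℝ) 1, Ioc (0 : ℝ) 1 ∈ 𝓝 r := fun r hr => Ioc_mem_nhds hr.1 hr.2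
  have cξ := d.xi_smooth.continuousOn
  have cζ := d.zeta_smooth.continuousOn
  have o1 : ∀ r ∈ Ioo (0 : ℝ) 1,
      deriv (deriv d.xi) r = d.xi r - (N - 1 : ℕ) / r * ξ1 r := by
    intro r hr
    have := d.xi_ode r hr
    rw [(hξ r (n1 r hr)).1.deriv] at this
    rw [hcast]; linarith
  have o2 : ∀ r ∈ Ioo (0 : ℝ) 1,
      deriv (deriv d.zeta) r = d.zeta r - (N - 1 : ℕ) / r * ζ1 r := by
    intro r hr
    have := d.zeta_ode r hr
    rw [(hζ r (n2 r hr)).1.deriv] at this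
    rw [hcast]; linarith
  have dξ1 : ∀ r ∈ Ioo (0 : ℝ) 1, HasDerivAt ξ1 (d.xi r - (N - 1 : ℕ) / r * ξ1 r) r :=
    fun r hr => o1 r hr ▸ (hξ r (n1 r hr)).2.1
  have dζ1 : ∀ r ∈ Ioo (0 : ℝ) 1, HasDerivAt ζ1 (d.zeta r - (N - 1 : ℕ) / r * ζ1 r) r :=
    fun r hr => o2 r hr ▸ (hζ r (n2 r hr)).2.1
  have hIcc : Icc (0 : ℝ) 1 ∈ 𝓝[>] (0 : ℝ) := Icc_mem_nhdsGT one_pos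
  have hIoo : Ioo (0 : ℝ) 1 ∈ 𝓝[>] (0 : ℝ) := Ioo_mem_nhdsGT one_pos
  have l0 : ∀ {f : ℝ → ℝ}, ContinuousOn f (Icc 0 1) → Tendsto f (𝓝[>] 0) (𝓝 (f 0)) :=
    fun {f} hf => (hf 0 ⟨le_rfl, zero_le_one⟩).mono_left (nhdsWithin_le_of_mem hIcc)
  have lid : Tendsto (fun r : ℝ => r) (𝓝[>] 0) (𝓝 0) := nhdsWithin_le_nhds
  have ξ1zero : ξ1 0 = 0 := by
    -- `(N-1) ξ'(r) = r (ξ(r) - ξ''(r))`, and `ξ''` is bounded near `0`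
    have h1 : Tendsto (fun r => r * (d.xi r - derivWithin ξ1 (Icc 0 1) r) / ((N - 1 : ℕ) : ℝ))
        (𝓝[>] 0) (𝓝 (0 * (d.xi 0 - derivWithin ξ1 (Icc 0 1) 0) / ((N - 1 : ℕ) : ℝ))) :=
      (lid.mul ((l0 cξ).sub (l0 cξ2))).div_const _
    rw [zero_mul, zero_div] at h1
    refine tendsto_nhds_unique ((l0 cξ1).congr' ?_) h1
    filter_upwards [hIoo] with r hr
    rw [← (hξ r (n1 r hr)).2.2, o1 r hr]
    have := hr.1.ne'
    field_simp
    ring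
  have w0 : ∀ r ∈ Ioo (0 : ℝ) 1, r ^ (N - 1) * (ξ1 r * d.zeta r - d.xi r * ζ1 r) = 1 := by
    intro r hr
    have := d.wronskian r ⟨hr.1, hr.2.le⟩
    rwa [(hξ r (n1 r hr)).1.deriv, (hζ r (n2 r hr)).1.deriv] at this
  have w1 : (1 : ℝ) ^ (N - 1) * (ξ1 1 * d.zeta 1 - d.xi 1 * ζ1 1) = 1 := by
    have hsub : Ioc (0 : ℝ) 1 ⊆ Icc 0 1 := Ioc_subset_Icc_self
    have hc : ContinuousOn (fun r => r ^ (N - 1) * (ξ1 r * d.zeta r - d.xi r * ζ1 r))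
        (Ioc 0 1) :=
      (continuous_pow _).continuousOn.mul
        (((cξ1.mono hsub).mul cζ).sub ((cξ.mono hsub).mul cζ1))
    have h1 := (hc 1 ⟨one_pos, le_rfl⟩).mono_left
      (nhdsWithin_le_of_mem (Ioc_mem_nhdsLT one_pos) : 𝓝[<] (1 : ℝ) ≤ _)
    refine tendsto_nhds_unique h1 (tendsto_const_nhds.congr' ?_)
    filter_upwards [(Ioo_mem_nhdsLT one_pos : Ioo (0 : ℝ) 1 ∈ 𝓝[<] (1 : ℝ))] with r hr
    exact (w0 r hr).symm
  have ζ1one : ζ1 1 = 0 := by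
    have h := d.wronskian 1 ⟨one_pos, le_rfl⟩
    rw [d.zeta_deriv_one] at h
    -- the Wronskian forces `deriv ξ 1 ≠ 0`, hence this derivative is not a junk value
    have hne : deriv d.xi 1 ≠ 0 := by
      intro h0; rw [h0] at h; simp at h
    have hd : DifferentiableAt ℝ d.xi 1 := differentiableAt_of_deriv_ne_zero hne
    have e : ξ1 1 = deriv d.xi 1 := hd.derivWithin (hu 1 ⟨zero_le_one, le_rfl⟩)
    rw [e] at w1
    have hp := d.xi_pos 1 ⟨zero_le_one, le_rfl⟩
    have : d.xi 1 * ζ1 1 = 0 := by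
      simp only [one_pow, one_mul, mul_zero, sub_zero] at h w1; linarith
    exact (mul_eq_zero.1 this).resolve_left hp.ne'
  refine ⟨cξ, cξ1, cζ, cζ1, fun r hr => (hξ r (n1 r hr)).1, dξ1, fun r hr => (hζ r (n2 r hr)).1,
    dζ1, d.xi_pos, d.zeta_pos, ξ1zero, ?_, ζ1one, ?_, ?_, ?_⟩
  · exact pos_of_left_zero le_rfl cξ1 dξ1 (fun r hr => d.xi_pos r ⟨hr.1.le, hr.2.le⟩) ξ1zero
  · exact neg_of_right_zero le_rfl cζ1 dζ1 (fun r hr => d.zeta_pos r ⟨hr.1, hr.2.le⟩) ζ1one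
  · intro r hr
    rcases hr.2.lt_or_eq with h | h
    · exact w0 r ⟨hr.1, h⟩
    · rw [h]; exact w1
  · have h := (lid.mul (l0 cξ1)).mul d.zeta_lim
    rw [zero_mul, zero_mul] at h
    refine h.congr fun r => ?_
    have : N - 1 = N - 2 + 1 := by omega
    rw [this, pow_succ]; ring

/-- The combinations `φ`, `ψ` of `ζ` and `ξ` with vanishing derivative at `a` and at `b`. -/
lemma FundData.linData {n : ℕ} {ξ ξ1 ζ ζ1 : ℝ → ℝ} (F : FundData n ξ ξ1 ζ ζ1) {a b σ : ℝ}
    (ha : 0 ≤ a) (hab : a < b) (hb : b ≤ 1) {A B : ℝ}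
    (hAB : (a = 0 ∧ A = 0 ∧ B = 1) ∨ (0 < a ∧ A = ξ1 a ∧ B = -ζ1 a))
    (σmem : σ ∈ Ioo a b)
    (hrefl : (A * ζ1 σ + B * ξ1 σ) * (ξ1 b * ζ σ - ζ1 b * ξ σ) +
      (A * ζ σ + B * ξ σ) * (ξ1 b * ζ1 σ - ζ1 b * ξ1 σ) = 0)
    (huniq : ∀ s ∈ Ioo a b, (A * ζ1 s + B * ξ1 s) * (ξ1 b * ζ s - ζ1 b * ξ s) +
      (A * ζ s + B * ξ s) * (ξ1 b * ζ1 s - ζ1 b * ξ1 s) = 0 → s = σ) :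
    LinData n a b (A * ζ1 b + B * ξ1 b) σ (fun r => A * ζ r + B * ξ r)
      (fun r => A * ζ1 r + B * ξ1 r) (fun r => ξ1 b * ζ r - ζ1 b * ξ r)
      (fun r => ξ1 b * ζ1 r - ζ1 b * ξ1 r) := by
  have hb0 : 0 < b := ha.trans_lt hab
  have iIoo : ∀ {r}, r ∈ Ioo a b → r ∈ Ioo (0 : ℝ) 1 := fun hr =>
    ⟨ha.trans_lt hr.1, hr.2.trans_le hb⟩
  have iIoc : ∀ {r}, r ∈ Ioc a b → r ∈ Ioc (0 : ℝ) 1 := fun hr =>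
    ⟨ha.trans_lt hr.1, hr.2.trans hb⟩
  have iIcc : ∀ {r}, r ∈ Icc a b → r ∈ Icc (0 : ℝ) 1 := fun hr => ⟨ha.trans hr.1, hr.2.trans hb⟩
  have iIcc' : ∀ {r}, r ∈ Ioc a b → r ∈ Icc (0 : ℝ) 1 := fun hr => iIcc ⟨hr.1.le, hr.2⟩
  have hC : 0 < ξ1 b := F.ξ1pos b ⟨hb0, hb⟩
  have hD : ζ1 b ≤ 0 := by
    rcases hb.lt_or_eq with h | h
    · exact (F.ζ1neg b ⟨hb0, h⟩).le
    · rw [h, F.ζ1one]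
  have hA : 0 ≤ A := by
    rcases hAB with ⟨-, h, -⟩ | ⟨h0, h, -⟩
    · exact h.ge
    · rw [h]; exact (F.ξ1pos a ⟨h0, hab.le.trans hb⟩).le
  have hB : 0 < B := by
    rcases hAB with ⟨-, -, h⟩ | ⟨h0, -, h⟩
    · rw [h]; exact one_pos
    · rw [h]; exact neg_pos.2 (F.ζ1neg a ⟨h0, hab.trans_le hb⟩)
  have hdζ : ∀ {f : ℝ → ℝ}, ContinuousOn f (Ioc 0 1) → ContinuousOn (fun r => A * f r) (Icc a b) := by
    intro f hf
    rcases hAB with ⟨-, h, -⟩ | ⟨h0, -, -⟩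
    · simp only [h, zero_mul]; exact continuousOn_const
    · exact continuousOn_const.mul (hf.mono fun r hr => ⟨h0.trans_le hr.1, hr.2.trans hb⟩)
  have hSol : Sol n a b id (fun r => A * ζ r + B * ξ r) (fun r => A * ζ1 r + B * ξ1 r) := by
    refine ⟨(hdζ F.cζ).add (continuousOn_const.mul (F.cξ.mono fun r hr => iIcc hr)),
      (hdζ F.cζ1).add (continuousOn_const.mul (F.cξ1.mono fun r hr => iIcc hr)),
      fun r hr => ((F.dζ r (iIoo hr)).const_mul A).add ((F.dξ r (iIoo hr)).const_mul B),
      fun r hr => ?_, ?_⟩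
    · refine (((F.dζ1 r (iIoo hr)).const_mul A).add
        ((F.dξ1 r (iIoo hr)).const_mul B)).congr_deriv ?_
      simp only [id]; ring
    · rcases hAB with ⟨h0, h1, -⟩ | ⟨h0, h1, h2⟩
      · simp [h0, h1, F.ξ1zero]
      · simp only [h1, h2]; ring
  have φpos : ∀ r ∈ Icc a b, 0 < A * ζ r + B * ξ r := by
    intro r hr
    have h1 := mul_pos hB (F.ξpos r (iIcc hr))
    rcases hAB with ⟨-, h, -⟩ | ⟨h0, -, -⟩
    · rw [h, zero_mul, zero_add]; exact h1
    · have := mul_nonneg hA (F.ζpos r ⟨h0.trans_le hr.1, hr.2.trans hb⟩).le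
      linarith
  have φ1pos : ∀ r ∈ Ioc a b, 0 < A * ζ1 r + B * ξ1 r :=
    pos_of_left_zero ha hSol.cv hSol.dv (fun r hr => φpos r ⟨hr.1.le, hr.2.le⟩) hSol.va
  have cψ : ContinuousOn (fun r => ξ1 b * ζ r - ζ1 b * ξ r) (Ioc a b) :=
    (continuousOn_const.mul (F.cζ.mono fun r hr => iIoc hr)).sub
      (continuousOn_const.mul (F.cξ.mono fun r hr => iIcc' hr))
  have cψ1 : ContinuousOn (fun r => ξ1 b * ζ1 r - ζ1 b * ξ1 r) (Ioc a b) :=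
    (continuousOn_const.mul (F.cζ1.mono fun r hr => iIoc hr)).sub
      (continuousOn_const.mul (F.cξ1.mono fun r hr => iIcc' hr))
  have dψ1 : ∀ r ∈ Ioo a b, HasDerivAt (fun r => ξ1 b * ζ1 r - ζ1 b * ξ1 r)
      ((fun r => ξ1 b * ζ r - ζ1 b * ξ r) r - n / r * (ξ1 b * ζ1 r - ζ1 b * ξ1 r)) r := by
    intro r hr
    refine (((F.dζ1 r (iIoo hr)).const_mul (ξ1 b)).sub
      ((F.dξ1 r (iIoo hr)).const_mul (ζ1 b))).congr_deriv ?_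
    ring
  have ψpos : ∀ r ∈ Ioc a b, 0 < ξ1 b * ζ r - ζ1 b * ξ r := by
    intro r hr
    have h1 := mul_pos hC (F.ζpos r (iIoc hr))
    have h2 := mul_nonpos_of_nonpos_of_nonneg hD (F.ξpos r (iIcc' hr)).le
    linarith
  have ψ1b : ξ1 b * ζ1 b - ζ1 b * ξ1 b = 0 := by ring
  have hc := φ1pos b ⟨hab, le_rfl⟩
  have hwr : ∀ r ∈ Ioc a b, r ^ n * ((A * ζ1 r + B * ξ1 r) * (ξ1 b * ζ r - ζ1 b * ξ r) -
      (A * ζ r + B * ξ r) * (ξ1 b * ζ1 r - ζ1 b * ξ1 r)) = A * ζ1 b + B * ξ1 b := by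
    intro r hr
    linear_combination (A * ζ1 b + B * ξ1 b) * F.wr r (iIoc hr)
  -- the reflection function, its sign at `b` and its sign near `a`
  set R : ℝ → ℝ := fun s => (A * ζ1 s + B * ξ1 s) * (ξ1 b * ζ s - ζ1 b * ξ s) +
      (A * ζ s + B * ξ s) * (ξ1 b * ζ1 s - ζ1 b * ξ1 s) with hR
  have cR : ContinuousOn R (Ioc a b) :=
    ((hSol.cv.mono Ioc_subset_Icc_self).mul cψ).add ((hSol.cu.mono Ioc_subset_Icc_self).mul cψ1)
  have Rb : 0 < R b := by
    simp only [hR, ψ1b, mul_zero, add_zero]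
    exact mul_pos hc (ψpos b ⟨hab, le_rfl⟩)
  have hlim : Tendsto (fun r => r ^ n * ((A * ζ1 r + B * ξ1 r) * (ξ1 b * ζ r - ζ1 b * ξ r)))
      (𝓝[>] a) (𝓝 0) := by
    rcases hAB with ⟨h0, h1, h2⟩ | ⟨h0, -, -⟩
    · subst h0
      have hIcc : Icc (0 : ℝ) 1 ∈ 𝓝[>] (0 : ℝ) := Icc_mem_nhdsGT one_pos
      have hc0 : ContinuousOn (fun r => r ^ n * (ξ1 r * ξ r)) (Icc 0 1) :=
        (continuous_pow n).continuousOn.mul (F.cξ1.mul F.cξ)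
      have l1 := (hc0 0 ⟨le_rfl, zero_le_one⟩).mono_left (nhdsWithin_le_of_mem hIcc)
      have l2 := (F.lim.const_mul (ξ1 b)).sub (l1.const_mul (ζ1 b))
      simp only [F.ξ1zero, zero_mul, mul_zero, sub_zero] at l2
      refine l2.congr fun r => ?_
      rw [h1, h2]; ring
    · have hmem : Icc a b ∈ 𝓝[>] a := Icc_mem_nhdsGT hab
      have hs : ∀ {r}, r ∈ Icc a b → r ∈ Ioc (0 : ℝ) 1 := fun hr =>
        ⟨h0.trans_le hr.1, hr.2.trans hb⟩
      have hc0 : ContinuousOn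
          (fun r => r ^ n * ((A * ζ1 r + B * ξ1 r) * (ξ1 b * ζ r - ζ1 b * ξ r))) (Icc a b) :=
        (continuous_pow n).continuousOn.mul (hSol.cv.mul
          ((continuousOn_const.mul (F.cζ.mono fun r hr => hs hr)).sub
            (continuousOn_const.mul (F.cξ.mono fun r hr => iIcc hr))))
      have l1 := (hc0 a ⟨le_rfl, hab.le⟩).mono_left (nhdsWithin_le_of_mem hmem)
      have hva : A * ζ1 a + B * ξ1 a = 0 := hSol.va
      simpa [hva] using l1
  have hneg : ∀ s ∈ Ioo a b, ∃ x ∈ Ioo a s, R x < 0 := by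
    intro s hs
    have h1 := hlim.eventually (gt_mem_nhds (half_pos hc))
    obtain ⟨x, hx, hxs⟩ := (h1.and (Ioo_mem_nhdsGT hs.1)).exists
    refine ⟨x, hxs, ?_⟩
    have hw := hwr x ⟨hxs.1, (hxs.2.trans hs.2).le⟩
    have hp : 0 < x ^ n := pow_pos (ha.trans_lt hxs.1) n
    have : x ^ n * R x < 0 := by simp only [hR]; linarith
    exact neg_of_mul_neg_right this hp.le
  refine ⟨ha, hab, hb, hSol, φpos, φ1pos, cψ, cψ1,
    fun r hr => ((F.dζ r (iIoo hr)).const_mul _).sub ((F.dξ r (iIoo hr)).const_mul _), dψ1, ψ1b,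
    ψpos, neg_of_right_zero ha cψ1 dψ1 (fun r hr => ψpos r ⟨hr.1, hr.2.le⟩) ψ1b, hc, hwr, σmem,
    hrefl, ?_, ?_⟩
  · intro s hs
    change R s < 0
    by_contra hcon
    have hsb : s ∈ Ioo a b := ⟨hs.1, hs.2.trans σmem.2⟩
    obtain ⟨x, hx, hRx⟩ := hneg s hsb
    obtain ⟨y, hy, hRy⟩ := intermediate_value_Icc hx.2.le
      (cR.mono fun z hz => ⟨hx.1.trans_le hz.1, hz.2.trans hsb.2.le⟩) ⟨hRx.le, not_lt.1 hcon⟩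
    have := huniq y ⟨hx.1.trans_le hy.1, hy.2.trans_lt hsb.2⟩ hRy
    exact absurd (hy.2.trans_lt hs.2) (by rw [this]; exact lt_irrefl _)
  · intro s hs
    change 0 < R s
    by_contra hcon
    have has : a < s := σmem.1.trans hs.1
    obtain ⟨y, hy, hRy⟩ := intermediate_value_Icc hs.2.le
      (cR.mono fun z hz => ⟨has.trans_le hz.1, hz.2⟩) ⟨not_lt.1 hcon, Rb.le⟩
    have hyb : y < b := lt_of_le_of_ne hy.2 (by rintro rfl; exact Rb.ne' hRy)
    have := huniq y ⟨has.trans_le hy.1, hyb⟩ hRy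
    exact absurd (hs.1.trans_le hy.1) (by rw [this]; exact lt_irrefl _)

/-- Up to positive factors, `ξ_{[a,b]}` and `ζ_{[a,b]}` are the functions `φ` and `ψ` of
`FundData.linData`. -/
lemma GreenData.exists_scale {N : ℕ} (d : GreenData N) {a b : ℝ}
    (ha : 0 ≤ a) (hab : a < b) (hb : b ≤ 1) {ξ1 ζ1 : ℝ → ℝ}
    (F : FundData (N - 1) d.xi ξ1 d.zeta ζ1) :
    ∃ A B k l : ℝ, ((a = 0 ∧ A = 0 ∧ B = 1) ∨ (0 < a ∧ A = ξ1 a ∧ B = -ζ1 a)) ∧ 0 < k ∧ 0 < l ∧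
      (d.xiI a b = fun r => k * (A * d.zeta r + B * d.xi r)) ∧
      (d.zetaI a b = fun r => l * (ξ1 b * d.zeta r - ζ1 b * d.xi r)) := by
  have hb0 : 0 < b := ha.trans_lt hab
  have hC : 0 < ξ1 b := F.ξ1pos b ⟨hb0, hb⟩
  have e1 : ∀ r ∈ Ioo (0 : ℝ) 1, deriv d.xi r = ξ1 r := fun r hr => (F.dξ r hr).deriv
  have e2 : ∀ r ∈ Ioo (0 : ℝ) 1, deriv d.zeta r = ζ1 r := fun r hr => (F.dζ r hr).deriv
  rcases ha.eq_or_lt with h0 | h0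
  · subst h0
    rcases hb.lt_or_eq with h1 | h1
    · refine ⟨0, 1, 1 / ξ1 b, 1, Or.inl ⟨rfl, rfl, rfl⟩, one_div_pos.2 hC, one_pos, ?_, ?_⟩
      · funext r
        simp only [xiI, h1.ne, if_true, if_false, e1 b ⟨hb0, h1⟩]; ring
      · funext r
        simp only [zetaI, h1.ne, if_true, if_false, e1 b ⟨hb0, h1⟩, e2 b ⟨hb0, h1⟩]; ring
    · subst h1
      refine ⟨0, 1, 1, 1 / ξ1 1, Or.inl ⟨rfl, rfl, rfl⟩, one_pos, one_div_pos.2 hC, ?_, ?_⟩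
      · funext r
        simp only [xiI, if_true]; ring
      · funext r
        simp only [zetaI, if_true, F.ζ1one]
        field_simp
        ring
  · have ha1 : a ∈ Ioo (0 : ℝ) 1 := ⟨h0, hab.trans_le hb⟩
    have hζa := F.ζ1neg a ha1
    rcases hb.lt_or_eq with h1 | h1
    · have hb1 : b ∈ Ioo (0 : ℝ) 1 := ⟨hb0, h1⟩
      have hi : ∀ r ∈ Icc a b, r ∈ Ioo (0 : ℝ) 1 := fun r hr =>
        ⟨h0.trans_le hr.1, hr.2.trans_lt h1⟩
      have hξa := F.ξ1pos a ⟨ha1.1, ha1.2.le⟩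
      have hpos : 0 < ξ1 a * ζ1 b - ξ1 b * ζ1 a := by
        refine pos_of_left_zero (n := N - 1) (v := fun r => ξ1 a * ζ1 r - ξ1 r * ζ1 a)
          (x := fun r => ξ1 a * d.zeta r - d.xi r * ζ1 a) ha ?_ ?_ ?_ (by ring) b
          ⟨hab, le_rfl⟩
        · exact (continuousOn_const.mul
            (F.cζ1.mono fun r hr => ⟨(hi r hr).1, (hi r hr).2.le⟩)).sub
            ((F.cξ1.mono fun r hr => ⟨(hi r hr).1.le, (hi r hr).2.le⟩).mul continuousOn_const)
        · intro r hr
          have hr' := hi r ⟨hr.1.le, hr.2.le⟩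
          refine (((F.dζ1 r hr').const_mul (ξ1 a)).sub
            ((F.dξ1 r hr').mul_const (ζ1 a))).congr_deriv ?_
          ring
        · intro r hr
          have hr' := hi r ⟨hr.1.le, hr.2.le⟩
          have p1 := mul_pos hξa (F.ζpos r ⟨hr'.1, hr'.2.le⟩)
          have p2 := mul_neg_of_pos_of_neg (F.ξpos r ⟨hr'.1.le, hr'.2.le⟩) hζa
          linarith
      have hk := one_div_pos.2 (Real.sqrt_pos.2 hpos)
      refine ⟨ξ1 a, -ζ1 a, _, _, Or.inr ⟨h0, rfl, rfl⟩, hk, hk, ?_, ?_⟩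
      · funext r
        simp only [xiI, h1.ne, h0.ne', if_false, e1 b hb1, e1 a ha1, e2 a ha1, e2 b hb1]; ring
      · funext r
        simp only [zetaI, h1.ne, h0.ne', if_false, e1 b hb1, e1 a ha1, e2 a ha1, e2 b hb1]; ring
    · subst h1
      refine ⟨ξ1 a, -ζ1 a, 1, 1 / (ξ1 1 * -ζ1 a), Or.inr ⟨h0, rfl, rfl⟩, one_pos,
        one_div_pos.2 (mul_pos hC (neg_pos.2 hζa)), ?_, ?_⟩
      · funext r
        simp only [xiI, h0.ne', if_true, if_false, e1 a ha1, e2 a ha1]; ring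
      · funext r
        have := hζa.ne
        simp only [zetaI, h0.ne', if_true, if_false, F.ζ1one, e2 a ha1]
        field_simp
        ring

theorem statement18 {N : ℕ} (hN : 3 ≤ N) (d : GreenData N)
    (sbar : ℝ → ℝ → ℝ) (hsbar : IsSBar d sbar)
    (a b : ℝ) (ha : 0 ≤ a) (hab : a < b) (hb : b ≤ 1) :
    ∃ p₀ : ℝ, 1 < p₀ ∧ ∃ (u : ℝ → ℝ → ℝ) (α : ℝ → ℝ),
      (∀ p : ℝ, p₀ < p →
        ContDiffOn ℝ 2 (u p) (Set.Icc a b) ∧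
        (∀ r ∈ Set.Icc a b, 0 < u p r) ∧
        deriv (u p) a = 0 ∧ deriv (u p) b = 0 ∧
        (∀ r ∈ Set.Ioo a b,
          -(deriv (deriv (u p)) r) - ((N : ℝ) - 1) / r * deriv (u p) r + u p r =
            u p r ^ p) ∧
        α p ∈ Set.Ioo a b ∧
        StrictMonoOn (u p) (Set.Icc a (α p)) ∧
        StrictAntiOn (u p) (Set.Icc (α p) b)) ∧
      Filter.Tendsto α Filter.atTop (nhds (sbar a b)) ∧
      (∀ r ∈ Set.Icc a b,
        Filter.Tendsto (fun p => u p r) Filter.atTop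
          (nhds (d.G a b r (sbar a b) / d.G a b (sbar a b) (sbar a b)))) := by
  have F := d.fundData hN
  set ξ1 := derivWithin d.xi (Icc 0 1)
  set ζ1 := derivWithin d.zeta (Ioc 0 1)
  obtain ⟨A, B, k, l, hAB, hk, hl, hφ, hψ⟩ := d.exists_scale ha hab hb F
  obtain ⟨σmem, hrefl, huniq⟩ := hsbar a b ha hab hb
  set σ := sbar a b
  have hB : 0 < B := by
    rcases hAB with ⟨-, -, h⟩ | ⟨h0, -, h⟩
    · rw [h]; exact one_pos
    · rw [h]; exact neg_pos.2 (F.ζ1neg a ⟨h0, hab.trans_le hb⟩)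
  have hA : 0 ≤ A := by
    rcases hAB with ⟨-, h, -⟩ | ⟨h0, h, -⟩
    · exact h.ge
    · rw [h]; exact (F.ξ1pos a ⟨h0, hab.le.trans hb⟩).le
  have hb0 : 0 < b := ha.trans_lt hab
  have hD : ζ1 b ≤ 0 := by
    rcases hb.lt_or_eq with h | h
    · exact (F.ζ1neg b ⟨hb0, h⟩).le
    · rw [h, F.ζ1one]
  have key : ∀ s ∈ Ioo a b, (d.ReflectionAt a b s ↔
      (A * ζ1 s + B * ξ1 s) * (ξ1 b * d.zeta s - ζ1 b * d.xi s) +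
      (A * d.zeta s + B * d.xi s) * (ξ1 b * ζ1 s - ζ1 b * ξ1 s) = 0) := by
    intro s hs
    have hs' : s ∈ Ioo (0 : ℝ) 1 := ⟨ha.trans_lt hs.1, hs.2.trans_le hb⟩
    have hζ := F.ζpos s ⟨hs'.1, hs'.2.le⟩
    have hξ := F.ξpos s ⟨hs'.1.le, hs'.2.le⟩
    have p1 : 0 < A * d.zeta s + B * d.xi s :=
      add_pos_of_nonneg_of_pos (mul_nonneg hA hζ.le) (mul_pos hB hξ)
    have p2 : 0 < ξ1 b * d.zeta s - ζ1 b * d.xi s := by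
      have q1 := mul_pos (F.ξ1pos b ⟨hb0, hb⟩) hζ
      have q2 := mul_nonpos_of_nonpos_of_nonneg hD hξ.le
      linarith
    have d1 : deriv (d.xiI a b) s = k * (A * ζ1 s + B * ξ1 s) := by
      rw [hφ]
      exact ((((F.dζ s hs').const_mul A).add ((F.dξ s hs').const_mul B)).const_mul k).deriv
    have d2 : deriv (d.zetaI a b) s = l * (ξ1 b * ζ1 s - ζ1 b * ξ1 s) := by
      rw [hψ]
      exact ((((F.dζ s hs').const_mul (ξ1 b)).sub
        ((F.dξ s hs').const_mul (ζ1 b))).const_mul l).deriv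
    unfold GreenData.ReflectionAt
    rw [d1, d2, hφ, hψ]
    simp only
    rw [mul_div_mul_left _ _ hk.ne', mul_div_mul_left _ _ hl.ne', div_add_div _ _ p1.ne' p2.ne',
      div_eq_zero_iff, or_iff_left (mul_pos p1 p2).ne']
  have L := F.linData ha hab hb hAB σmem ((key σ σmem).1 hrefl)
    fun s hs h => huniq s hs ((key s hs).2 h)
  obtain ⟨u, v, α, hu, hα, hlim⟩ := shooting L
  obtain ⟨p₁, hp₁⟩ := eventually_atTop.1 hu
  have hcast : ((N - 1 : ℕ) : ℝ) = (N : ℝ) - 1 := by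
    rw [Nat.cast_sub (by omega)]; simp
  refine ⟨max p₁ 2, lt_max_of_lt_right one_lt_two, u, α, fun p hp => ?_, hα, fun r hr => ?_⟩
  · obtain ⟨h1, h2, h3, h4, h5, h6, h7, h8, h9⟩ := hp₁ p ((le_max_left _ _).trans hp.le)
    have hd : deriv (u p) = v p := funext fun r => (h2 r).deriv
    refine ⟨h1, h6, by rw [hd, h3], by rw [hd, h4], fun r hr => ?_, h7, h8, h9⟩
    rw [hd, (h5 r hr).deriv, hcast]
    ring
  · have h := hlim r hr
    have hσ0 : 0 < σ := ha.trans_lt σmem.1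
    have hpw : σ ^ (N - 1) ≠ 0 := (pow_pos hσ0 _).ne'
    have hφσ := (L.φpos σ ⟨σmem.1.le, σmem.2.le⟩).ne'
    have hψσ := (L.ψpos σ ⟨σmem.1, σmem.2.le⟩).ne'
    have hk' := hk.ne'
    have hl' := hl.ne'
    have e : d.G a b r σ / d.G a b σ σ = if r ≤ σ
        then (A * d.zeta r + B * d.xi r) / (A * d.zeta σ + B * d.xi σ)
        else (ξ1 b * d.zeta r - ζ1 b * d.xi r) / (ξ1 b * d.zeta σ - ζ1 b * d.xi σ) := by
      simp only [GreenData.G, le_refl, if_true, hφ, hψ]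
      split_ifs
      · field_simp
      · field_simp
    rw [e]
    exact h
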